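/- arXiv:2112.05081 — 3 statements merged into one kernel-verified Lean document; each statement's English description precedes it below -/
import Mathlib

section
/- Let K be a field of characteristic different from 2 and let L be a quadratic field extension of K. Let B be a central simple K-algebra whose Brauer class is 2-torsion (i.e., B ⊗_K B is Brauer-equivalent to K), and suppose that the base change B ⊗_K L is Brauer-equivalent to a quaternion algebra over L (i.e., there exist x, y ∈ L^× such that B ⊗_K L is Brauer-equivalent to the quaternion algebra (x,y)_L). Then there exist a, b ∈ K^× such that the base change (a,b)_L of the quaternion algebra (a,b)_K is Brauer-equivalent to B ⊗_K L. -/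
open scoped TensorProduct Quaternion

/-- Two (associative, unital) algebras over a field `F` are *Brauer-equivalent* if they become
isomorphic as `F`-algebras after tensoring with (i.e. taking) matrix algebras of suitable
positive sizes. -/
def BrauerEquivalent (F : Type*) [Field F] (A B : Type*)
    [Ring A] [Algebra F A] [Ring B] [Algebra F B] : Prop :=
  ∃ n m : ℕ, 0 < n ∧ 0 < m ∧
    Nonempty (Matrix (Fin n) (Fin n) A ≃ₐ[F] Matrix (Fin m) (Fin m) B)

namespace QDesc

theorem matrix_fix {Q ι : Type*} [Ring Q] [Fintype ι] [DecidableEq ι] [Nonempty ι]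
    (f : Matrix ι ι Q →+* Matrix ι ι Q)
    (hf : ∀ i j, f (Matrix.single i j 1) = Matrix.single i j 1) :
    ∃ φ : Q →+* Q, ∀ X, f X = X.map φ := by
  have hs : ∀ q, ∃ q', f (Matrix.scalar ι q) = Matrix.scalar ι q' := by
    intro q
    have : f (Matrix.scalar ι q) ∈ Set.range (Matrix.scalar ι) := by
      apply Matrix.mem_range_scalar_of_commute_single
      intro i j _
      rw [Commute, SemiconjBy, ← hf, ← map_mul, ← map_mul]
      congr 1
      ext a b
      simp [Matrix.single_apply]
    obtain ⟨q', h⟩ := this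
    exact ⟨q', h.symm⟩
  choose g hg using hs
  have hinj : Function.Injective (Matrix.scalar (α := Q) ι) := fun a b h => by
    obtain ⟨o⟩ := ‹Nonempty ι›
    simpa using congrFun (congrFun h o) o
  let φ : Q →+* Q :=
    { toFun := g
      map_one' := hinj (by rw [← hg, map_one, map_one])
      map_zero' := hinj (by rw [← hg, map_zero, map_zero])
      map_add' := fun a b => hinj (by rw [← hg, map_add, map_add, map_add, hg, hg])
      map_mul' := fun a b => hinj (by rw [← hg, map_mul, map_mul, map_mul, hg, hg]) }
  refine ⟨φ, fun X => ?_⟩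
  have hX : ∀ Y : Matrix ι ι Q,
      Y = ∑ i, ∑ j, Matrix.scalar ι (Y i j) * Matrix.single i j (1 : Q) := by
    intro Y
    conv_lhs => rw [Matrix.matrix_eq_sum_single Y]
    refine Finset.sum_congr rfl fun i _ => Finset.sum_congr rfl fun j _ => ?_
    ext a b
    simp [Matrix.single_apply]
  conv_lhs => rw [hX X]
  rw [hX (X.map φ)]
  simp only [map_sum, map_mul, hf, hg, Matrix.map_apply]
  rfl

theorem matrix_auto {Q ι : Type*} [Ring Q] [Nontrivial Q] [Fintype ι] [DecidableEq ι] [Nonempty ι]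
    (hu : ∀ q : Q, q ≠ 0 → IsUnit q) 
    (hreg : ∀ G : Matrix ι ι Q, (∀ X, G * X = 0 → X = 0) → IsUnit G)
    (θ : Matrix ι ι Q ≃+* Matrix ι ι Q) :
    ∃ (G G' : Matrix ι ι Q) (φ : Q ≃+* Q), G * G' = 1 ∧ G' * G = 1 ∧
      ∀ X, θ X * G = G * X.map φ := by
  classical
  obtain ⟨o⟩ := ‹Nonempty ι›
  let E : ι → ι → Matrix ι ι Q := fun i j => Matrix.single i j 1
  have hE : ∀ i j k l, E i j * E k l = if j = k then E i l else 0 := by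
    intro i j k l
    split_ifs with h
    · subst h; simp [E]
    · simp [E, h]
  have hne : θ (E o o) ≠ 0 := by
    rw [Ne, map_eq_zero_iff θ θ.injective]
    intro h
    have := congrFun (congrFun h o) o
    simp [E] at this
  obtain ⟨r, p, hrp⟩ : ∃ r p, θ (E o o) r p ≠ 0 := by
    by_contra! h
    exact hne (by ext i j; simp [h])
  let G0 : Matrix ι ι Q := ∑ k, θ (E k o) * E p k
  have hG1 : ∀ i j, θ (E i j) * G0 = θ (E i o) * E p j := by
    intro i j
    simp only [G0, Finset.mul_sum, ← mul_assoc, ← map_mul, hE]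
    rw [Finset.sum_eq_single j] <;> simp +contextual [eq_comm]
  have hG2 : ∀ i j, G0 * E i j = θ (E i o) * E p j := by
    intro i j
    simp only [G0, Finset.sum_mul, mul_assoc, hE]
    rw [Finset.sum_eq_single i] <;> simp +contextual [eq_comm]
  have hG0 : IsUnit G0 := by
    apply hreg
    intro X hX
    ext i j
    have h1 : θ (E o o) * E p i * X = 0 := by
      rw [← hG1, mul_assoc, hX, mul_zero]
    have h2 := congrFun (congrFun h1 r) j
    have h3 : (θ (E o o) * E p i * X) r j = θ (E o o) r p * X i j := by
      rw [Matrix.mul_apply, Finset.sum_eq_single i]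
      · simp [E]
      · intro b _ hb
        simp [E, hb]
      · simp
    rw [h3] at h2
    exact (hu _ hrp).mul_right_eq_zero.1 h2
  obtain ⟨G, hG⟩ := hG0
  let f : Matrix ι ι Q →+* Matrix ι ι Q :=
    { toFun := fun X => (↑G⁻¹ : Matrix ι ι Q) * θ X * (G : Matrix ι ι Q)
      map_one' := by simp
      map_zero' := by simp
      map_add' := fun a b => by simp [mul_add, add_mul]
      map_mul' := fun a b => by simp [mul_assoc] }
  let f' : Matrix ι ι Q →+* Matrix ι ι Q :=
    { toFun := fun X => θ.symm ((G : Matrix ι ι Q) * X * (↑G⁻¹ : Matrix ι ι Q))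
      map_one' := by simp
      map_zero' := by simp
      map_add' := fun a b => by simp [mul_add, add_mul]
      map_mul' := fun a b => by simp [← map_mul, mul_assoc] }
  have hff' : ∀ X, f (f' X) = X := fun X => by simp [f, f', mul_assoc]
  have hf'f : ∀ X, f' (f X) = X := fun X => by
    change θ.symm ((G : Matrix ι ι Q) * ((↑G⁻¹ : Matrix ι ι Q) * θ X * (G : Matrix ι ι Q)) *
      (↑G⁻¹ : Matrix ι ι Q)) = X
    rw [mul_assoc, mul_assoc, Units.mul_inv, mul_one, Units.mul_inv_cancel_left,
      RingEquiv.symm_apply_apply]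
  have hfE : ∀ i j, f (E i j) = E i j := by
    intro i j
    change (↑G⁻¹ : Matrix ι ι Q) * θ (E i j) * (G : Matrix ι ι Q) = _
    rw [mul_assoc, hG, hG1, ← hG2, ← hG, Units.inv_mul_cancel_left]
  have hf'E : ∀ i j, f' (E i j) = E i j := fun i j => by
    conv_lhs => rw [← hfE, hf'f]
  obtain ⟨φ, hφ⟩ := matrix_fix f hfE
  obtain ⟨φ', hφ'⟩ := matrix_fix f' hf'E
  have h1 : ∀ q, φ (φ' q) = q := fun q => by
    have := hff' (Matrix.scalar ι q)
    rw [hφ, hφ'] at this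
    simpa using congrFun (congrFun this o) o
  have h2 : ∀ q, φ' (φ q) = q := fun q => by
    have := hf'f (Matrix.scalar ι q)
    rw [hφ, hφ'] at this
    simpa using congrFun (congrFun this o) o
  refine ⟨G, (G⁻¹ : (Matrix ι ι Q)ˣ), RingEquiv.ofRingHom φ φ' (RingHom.ext h1) (RingHom.ext h2),
    by simp, by simp, fun X => ?_⟩
  have h3 : (↑G⁻¹ : Matrix ι ι Q) * θ X * (G : Matrix ι ι Q) = X.map φ := hφ X
  change _ = _ * X.map φ
  rw [← h3]
  simp [mul_assoc]

end QDesc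

namespace QDesc

theorem scalar_comm {Q ι : Type*} [Ring Q] [Fintype ι] [DecidableEq ι] 
    (q : Q) (hq : ∀ p, q * p = p * q) (X : Matrix ι ι Q) :
    Matrix.scalar ι q * X = X * Matrix.scalar ι q := by
  ext i j
  simp [hq]

theorem key {L Q ι : Type*} [Field L] [Ring Q] [Nontrivial Q] [Algebra L Q] [StarRing Q]
    [Fintype ι] [DecidableEq ι] [Nonempty ι] (σ : L ≃+* L)
    (hu : ∀ q : Q, q ≠ 0 → IsUnit q)
    (hreg : ∀ G : Matrix ι ι Q, (∀ X, G * X = 0 → X = 0) → IsUnit G)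
    (hcent : ∀ q : Q, (∀ p, q * p = p * q) → ∃ l : L, q = algebraMap L Q l)
    (hskolem : ∀ χ : Q ≃+* Q, (∀ l, χ (algebraMap L Q l) = algebraMap L Q l) →
      ∃ w w' : Q, w * w' = 1 ∧ w' * w = 1 ∧ ∀ q, χ q * w = w * q)
    (hstar : ∀ φ : Q ≃+* Q, (∀ l, φ (algebraMap L Q l) = algebraMap L Q (σ l)) →
      ∀ q, φ (star q) = star (φ q))
    (hstarL : ∀ l, star (algebraMap L Q l) = algebraMap L Q l)
    (θ : Matrix ι ι Q ≃+* Matrix ι ι Q) (hθ2 : ∀ X, θ (θ X) = X)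
    (hθL : ∀ l, θ (Matrix.scalar ι (algebraMap L Q l)) = Matrix.scalar ι (algebraMap L Q (σ l)))
    (γ : Matrix ι ι Q ≃+* (Matrix ι ι Q)ᵐᵒᵖ)
    (hγL : ∀ l, (γ (Matrix.scalar ι (algebraMap L Q l))).unop =
      Matrix.scalar ι (algebraMap L Q l))
    (hγθ : ∀ X, (γ (θ X)).unop = θ (γ X).unop) :
    ∃ (φ : Q ≃+* Q) (u : Q) (m : L), (∀ l, φ (algebraMap L Q l) = algebraMap L Q (σ l)) ∧
      u ≠ 0 ∧ (∀ q, q * u = u * φ (φ q)) ∧ φ u = u ∧ u * star u = algebraMap L Q (m * σ m) := by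
  have hsinj : Function.Injective (Matrix.scalar (α := Q) ι) := fun a b h => by
    obtain ⟨o⟩ := ‹Nonempty ι›
    simpa using congrFun (congrFun h o) o
  have hsmap : ∀ (φ : Q ≃+* Q) (q : Q),
      (Matrix.scalar ι q).map φ = Matrix.scalar ι (φ q) := by
    intro φ q
    ext i j
    by_cases h : i = j <;> simp [h]
  have hLc : ∀ (l : L) (p : Q), algebraMap L Q l * p = p * algebraMap L Q l :=
    fun l p => Algebra.commutes l p
  obtain ⟨G, G', φ, hGG', hG'G, hφ⟩ := matrix_auto hu hreg θ
  have mapmul : ∀ (f : Q ≃+* Q) (X Y : Matrix ι ι Q), (X * Y).map f = X.map f * Y.map f :=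
    fun f X Y => Matrix.map_mul
  have cancelL : ∀ {A A' X Y : Matrix ι ι Q}, A' * A = 1 → A * X = A * Y → X = Y := by
    intro A A' X Y h1 h2
    rw [← one_mul X, ← h1, mul_assoc, h2, ← mul_assoc, h1, one_mul]
  have hφL : ∀ l, φ (algebraMap L Q l) = algebraMap L Q (σ l) := by
    intro l
    have h := hφ (Matrix.scalar ι (algebraMap L Q l))
    rw [hθL, hsmap, scalar_comm _ (hLc _)] at h
    exact (hsinj (cancelL hG'G h)).symm
  have hφs := hstar φ hφL
  -- the anti-automorphism
  let st : Matrix ι ι Q ≃+* (Matrix ι ι Q)ᵐᵒᵖ := starRingEquiv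
  have hst : ∀ X, (st X).unop = star X := fun X => rfl
  let δ : Matrix ι ι Q ≃+* Matrix ι ι Q := st.trans ((RingEquiv.op γ).trans (RingEquiv.opOp _).symm)
  have hδ : ∀ X, δ X = (γ (star X)).unop := fun X => rfl
  have hstars : ∀ q : Q, star (Matrix.scalar ι q) = Matrix.scalar ι (star q) := by
    intro q
    rw [Matrix.star_eq_conjTranspose]
    ext i j
    by_cases h : i = j
    · simp [h]
    · simp [h, Ne.symm h]
  obtain ⟨H0, H0', χ, hH1, hH2, hχ⟩ := matrix_auto hu hreg δ
  have hχL : ∀ l, χ (algebraMap L Q l) = algebraMap L Q l := by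
    intro l
    have h := hχ (Matrix.scalar ι (algebraMap L Q l))
    rw [hδ, hstars, hstarL, hγL, hsmap, scalar_comm _ (hLc _)] at h
    exact (hsinj (cancelL hH2 h)).symm
  obtain ⟨w, w', hw1, hw2, hw⟩ := hskolem χ hχL
  let H := H0 * Matrix.scalar ι w
  let H' := Matrix.scalar ι w' * H0'
  have hHH' : H * H' = 1 := by
    simp only [H, H']
    rw [mul_assoc, ← mul_assoc (Matrix.scalar ι w), ← map_mul, hw1, map_one, one_mul, hH1]
  have hH'H : H' * H = 1 := by
    simp only [H, H']
    rw [mul_assoc, ← mul_assoc H0', hH2, one_mul, ← map_mul, hw2, map_one]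
  have hH : ∀ X, (γ (star X)).unop * H = H * X := by
    intro X
    simp only [H]
    rw [← hδ, ← mul_assoc, hχ, mul_assoc, mul_assoc]
    congr 1
    ext i j
    simp [hw]
  -- U
  set U := G * G.map φ with hUdef
  have hU : ∀ X : Matrix ι ι Q, X * U = U * (X.map φ).map φ := by
    intro X
    rw [hUdef]
    conv_lhs => rw [← hθ2 X, ← mul_assoc, hφ, mul_assoc, ← mapmul, hφ, mapmul, ← mul_assoc]
  have hUr : U ∈ Set.range (Matrix.scalar ι) := by
    apply Matrix.mem_range_scalar_of_commute_single
    intro i j _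
    have h := hU (Matrix.single i j 1)
    rw [Commute, SemiconjBy, h]
    simp
  obtain ⟨u, hUu⟩ := hUr
  have hu1 : ∀ q, q * u = u * φ (φ q) := by
    intro q
    have h := hU (Matrix.scalar ι q)
    rw [← hUu, hsmap, hsmap, ← map_mul, ← map_mul] at h
    exact hsinj h
  have hu2 : φ u = u := by
    have h := hU G
    rw [hUdef, mul_assoc, ← mapmul, ← hUdef, ← hUu, hsmap] at h
    exact (hsinj (cancelL hG'G h)).symm
  have hGG'φ : G.map φ * G'.map φ = 1 := by
    rw [← mapmul, hGG', ← map_one (Matrix.scalar ι), hsmap, map_one]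
  have hu0 : u ≠ 0 := by
    rintro rfl
    rw [map_zero] at hUu
    have : U * (G'.map φ * G') = 1 := by
      rw [hUdef, mul_assoc, ← mul_assoc (G.map φ), hGG'φ, one_mul, hGG']
    rw [← hUu, zero_mul] at this
    exact zero_ne_one this
  have mapstar : ∀ X : Matrix ι ι Q, (star X).map φ = star (X.map φ) := by
    intro X
    ext i j
    simp [Matrix.star_apply, hφs]
  -- commutation
  have hP : ∀ Y : Matrix ι ι Q, θ (γ (star Y)).unop * (G * H.map φ) = G * H.map φ * Y.map φ := by
    intro Y
    rw [← mul_assoc, hφ, mul_assoc, ← mapmul, hH, mapmul, mul_assoc]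
  have hR : ∀ Y : Matrix ι ι Q, (γ (θ (star Y))).unop * (H * star G') = H * star G' * Y.map φ := by
    intro Y
    have h1 : θ (star Y) = star (star G' * Y.map φ * star G) := by
      rw [star_mul, star_mul, star_star, star_star, ← mapstar, ← mul_assoc, ← hφ, mul_assoc, hGG',
        mul_one]
    have h2 : star G * star G' = 1 := by rw [← star_mul, hG'G, star_one]
    rw [h1, ← mul_assoc, hH, mul_assoc H, mul_assoc (star G' * Y.map φ), h2, mul_one, ← mul_assoc]
  let R' := star G * H'
  have hRR' : (H * star G') * R' = 1 := by
    simp only [R']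
    rw [mul_assoc, ← mul_assoc (star G'), ← star_mul, hGG', star_one, one_mul, hHH']
  have hR'R : R' * (H * star G') = 1 := by
    simp only [R']
    rw [mul_assoc, ← mul_assoc H', hH'H, one_mul, ← star_mul, hG'G, star_one]
  have hS : ∀ Y : Matrix ι ι Q, Y * (R' * (G * H.map φ)) = (R' * (G * H.map φ)) * Y := by
    intro Y
    obtain ⟨Z, rfl⟩ : ∃ Z : Matrix ι ι Q, Z.map φ = Y := ⟨Y.map φ.symm, by ext; simp⟩
    apply cancelL hR'R
    rw [← mul_assoc, ← hR, hγθ, mul_assoc, ← mul_assoc _ R', hRR', one_mul, hP, ← mul_assoc _ _ (Z.map φ),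
      ← mul_assoc _ R', hRR', one_mul]
  obtain ⟨m0, hm0⟩ : (R' * (G * H.map φ)) ∈ Set.range (Matrix.scalar ι) := by
    apply Matrix.mem_range_scalar_of_commute_single
    intro i j _
    exact hS _
  obtain ⟨m, rfl⟩ := hcent m0 (fun p => hsinj (by
    rw [map_mul, map_mul, hm0, hS]))
  have hm : G * H.map φ * star G = Matrix.scalar ι (algebraMap L Q m) * H := by
    have : G * H.map φ = H * star G' * Matrix.scalar ι (algebraMap L Q m) := by
      rw [hm0, ← mul_assoc _ R', hRR', one_mul]
    rw [this, ← scalar_comm _ (hLc m), mul_assoc, mul_assoc, ← star_mul, hGG', star_one, mul_one]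
  refine ⟨φ, u, m, hφL, hu0, hu1, hu2, ?_⟩
  have h1 := congrArg (fun X : Matrix ι ι Q => G * X.map φ * star G) hm
  simp only [mapmul, hsmap, hφL, mapstar] at h1
  have h2 : G * (G.map φ * (H.map φ).map φ * star (G.map φ)) * star G = H * (U * star U) := by
    rw [← mul_assoc H, hU, hUdef, star_mul]
    simp only [mul_assoc]
  have h3 : G * (Matrix.scalar ι (algebraMap L Q (σ m)) * H.map φ) * star G =
      H * (Matrix.scalar ι (algebraMap L Q (m * σ m))) := by
    rw [← mul_assoc, ← scalar_comm _ (hLc _), mul_assoc, mul_assoc, ← mul_assoc G, hm,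
      ← mul_assoc, ← map_mul, ← map_mul, mul_comm, scalar_comm _ (hLc _)]
  rw [h2, h3, ← hUu, hstars, ← map_mul] at h1
  exact hsinj (cancelL hH'H h1)

theorem key2 {L Q : Type*} [Field L] [Ring Q] [Algebra L Q] [StarRing Q] (σ : L ≃+* L)
    (hu : ∀ q : Q, q ≠ 0 → IsUnit q)
    (htr : ∀ q : Q, ∃ t : L, q + star q = algebraMap L Q t)
    (φ : Q ≃+* Q) (u : Q) (m : L) (hφL : ∀ l, φ (algebraMap L Q l) = algebraMap L Q (σ l))
    (hu0 : u ≠ 0) (hu1 : ∀ q, q * u = u * φ (φ q)) (hu2 : φ u = u)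
    (hn : u * star u = algebraMap L Q (m * σ m)) :
    ∃ ψ : Q ≃+* Q, (∀ l, ψ (algebraMap L Q l) = algebraMap L Q (σ l)) ∧ ∀ q, ψ (ψ q) = q := by
  by_cases hl : ∃ l : L, u = algebraMap L Q l
  · obtain ⟨l, rfl⟩ := hl
    refine ⟨φ, hφL, fun q => ?_⟩
    have := hu1 q
    rw [← Algebra.commutes l q] at this
    exact ((hu _ hu0).mul_left_cancel this).symm
  · have hv0 : algebraMap L Q m + u ≠ 0 := by
      intro h
      exact hl ⟨-m, by rw [map_neg]; exact eq_neg_of_add_eq_zero_right h⟩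
    obtain ⟨v, hv⟩ := hu _ hv0
    obtain ⟨t, ht⟩ := htr u
    have huu : u * u = algebraMap L Q t * u - algebraMap L Q (m * σ m) := by
      rw [← hn, Algebra.commutes, ← ht, mul_add, add_sub_cancel_right]
    have hvv : (v : Q) * φ v = algebraMap L Q (m + σ m + t) * u := by
      rw [hv, map_add, hφL, hu2, mul_add, add_mul, add_mul, huu, ← Algebra.commutes (σ m) u]
      simp only [map_add, map_mul, add_mul]
      abel
    let ψ : Q ≃+* Q :=
      { toFun := fun q => v * φ q * (↑v⁻¹ : Q)
        invFun := fun q => φ.symm ((↑v⁻¹ : Q) * q * v)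
        left_inv := fun q => by simp [mul_assoc]
        right_inv := fun q => by simp [mul_assoc]
        map_add' := fun a b => by simp [mul_add, add_mul]
        map_mul' := fun a b => by simp [mul_assoc] }
    have hψ : ∀ q, ψ q = v * φ q * (↑v⁻¹ : Q) := fun q => rfl
    refine ⟨ψ, fun l => ?_, fun q => ?_⟩
    · rw [hψ, hφL, ← Algebra.commutes, mul_assoc, Units.mul_inv, mul_one]
    · rw [hψ, hψ, Units.mul_inv_eq_iff_eq_mul]
      have h1 : φ (↑v⁻¹ : Q) * φ v = 1 := by rw [← map_mul, Units.inv_mul, map_one]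
      have h2 : IsUnit (φ (v : Q)) := v.isUnit.map φ
      apply h2.mul_right_cancel
      rw [map_mul, map_mul, mul_assoc, mul_assoc, h1, mul_one, ← mul_assoc, hvv, mul_assoc,
        ← hu1, mul_assoc, hvv, ← mul_assoc, ← mul_assoc, Algebra.commutes]
end QDesc

namespace QDesc
open QuaternionAlgebra

theorem indep2 {L R : Type*} [Field L] [Ring R] [Nontrivial R] [Algebra L R] (h2 : (2 : L) ≠ 0)
    (i j : R) (a b : L) (ha : a ≠ 0) (hb : b ≠ 0) (hi : i * i = algebraMap L R a)
    (hj : j * j = algebraMap L R b) (hij : j * i = -(i * j)) (c0 c1 : L)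
    (h : c0 • (1 : R) + c1 • i = 0) : c0 = 0 ∧ c1 = 0 := by
  have h1 : j * (c0 • (1 : R) + c1 • i) * j = b • (c0 • (1 : R) - c1 • i) := by
    simp only [mul_add, add_mul, mul_smul_comm, smul_mul_assoc, mul_one, hij, neg_mul, mul_assoc, hj,
      Algebra.algebraMap_eq_smul_one]
    module
  rw [h, mul_zero, zero_mul, eq_comm, smul_eq_zero_iff_right hb] at h1
  have h3 : (2 * c0) • (1 : R) = 0 := by
    have : (2 * c0) • (1 : R) = (c0 • (1 : R) + c1 • i) + (c0 • (1 : R) - c1 • i) := by module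
    rw [this, h, h1, add_zero]
  have h0 : c0 = 0 := by
    rcases smul_eq_zero.1 h3 with h3 | h3
    · exact (mul_eq_zero.1 h3).resolve_left h2
    · exact absurd h3 one_ne_zero
  refine ⟨h0, ?_⟩
  rw [h0, zero_smul, zero_add] at h
  rcases smul_eq_zero.1 h with h | h
  · exact h
  · rw [h, zero_mul, Algebra.algebraMap_eq_smul_one, eq_comm] at hi
    rcases smul_eq_zero.1 hi with h | h
    · exact absurd h ha
    · exact absurd h one_ne_zero

theorem indep4 {L R : Type*} [Field L] [Ring R] [Nontrivial R] [Algebra L R] (h2 : (2 : L) ≠ 0)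
    (i j : R) (a b : L) (ha : a ≠ 0) (hb : b ≠ 0) (hi : i * i = algebraMap L R a)
    (hj : j * j = algebraMap L R b) (hij : j * i = -(i * j)) (c0 c1 c2 c3 : L)
    (h : c0 • (1 : R) + c1 • i + c2 • j + c3 • (i * j) = 0) :
    c0 = 0 ∧ c1 = 0 ∧ c2 = 0 ∧ c3 = 0 := by
  have h1 : i * (c0 • (1 : R) + c1 • i + c2 • j + c3 • (i * j)) * i =
      a • (c0 • (1 : R) + c1 • i - c2 • j - c3 • (i * j)) := by
    have hii : ∀ z, i * (i * z) = a • z := fun z => by rw [← mul_assoc, hi, Algebra.smul_def]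
    simp only [mul_add, add_mul, mul_smul_comm, smul_mul_assoc, mul_one, hij, mul_assoc, hi, hii,
      mul_neg, Algebra.algebraMap_eq_smul_one, one_mul]
    module
  rw [h, mul_zero, zero_mul, eq_comm, smul_eq_zero_iff_right ha] at h1
  have h3 : (2 * c0) • (1 : R) + (2 * c1) • i = 0 := by
    have : (2 * c0) • (1 : R) + (2 * c1) • i = (c0 • (1 : R) + c1 • i + c2 • j + c3 • (i * j)) +
      (c0 • (1 : R) + c1 • i - c2 • j - c3 • (i * j)) := by module
    rw [this, h, h1, add_zero]
  have h4 : ((2 * c2) • (1 : R) + (2 * c3) • i) * j = 0 := by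
    have : ((2 * c2) • (1 : R) + (2 * c3) • i) * j =
      (c0 • (1 : R) + c1 • i + c2 • j + c3 • (i * j)) -
      (c0 • (1 : R) + c1 • i - c2 • j - c3 • (i * j)) := by
        simp only [add_mul, smul_mul_assoc, one_mul]
        module
    rw [this, h, h1, sub_zero]
  have h5 : (2 * c2) • (1 : R) + (2 * c3) • i = 0 := by
    have := congrArg (· * j) h4
    simp only [mul_assoc, hj, zero_mul] at this
    rw [← Algebra.commutes, ← Algebra.smul_def, smul_eq_zero_iff_right hb] at this
    exact this
  have h6 := indep2 h2 i j a b ha hb hi hj hij _ _ h3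
  have h7 := indep2 h2 i j a b ha hb hi hj hij _ _ h5
  simpa [h2, and_assoc] using And.intro h6 h7

theorem quat_iso {K L R : Type*} [Field K] [Field L] [Algebra K L] [Ring R] [Nontrivial R]
    [Algebra L R] [Algebra K R] [IsScalarTower K L R] (h2 : (2 : L) ≠ 0)
    (hR : Module.finrank L R = 4)
    (i j : R) (a b : K) (ha : a ≠ 0) (hb : b ≠ 0) (hi : i * i = algebraMap K R a)
    (hj : j * j = algebraMap K R b) (hij : j * i = -(i * j)) :
    Nonempty (L ⊗[K] ℍ[K, a, b] ≃ₐ[L] R) := by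
  let B : QuaternionAlgebra.Basis R a 0 b :=
    { i := i, j := j, k := i * j
      i_mul_i := by simp [hi, Algebra.algebraMap_eq_smul_one]
      j_mul_j := by simp [hj, Algebra.algebraMap_eq_smul_one]
      i_mul_j := rfl
      j_mul_i := by simp [hij] }
  let f : L ⊗[K] ℍ[K, a, b] →ₐ[L] R :=
    Algebra.TensorProduct.lift (Algebra.ofId L R) B.liftHom (fun l q => Algebra.commutes l _)
  have : FiniteDimensional L R := Module.finite_of_finrank_pos (by omega)
  have hinj : Function.Injective f := by
    rw [injective_iff_map_eq_zero]
    intro z hz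
    let bs := (basisOneIJK a 0 b).baseChange L
    rw [← bs.sum_repr z] at hz ⊢
    generalize bs.repr z = c at *
    simp only [Fin.sum_univ_four, map_add, map_smul] at hz
    have hf : ∀ q, f (1 ⊗ₜ q) = B.lift q := fun q => by
      refine (Algebra.TensorProduct.lift_tmul (Algebra.ofId L R) B.liftHom _ 1 q).trans ?_
      rw [map_one, one_mul]
      rfl
    have e0 : f (bs 0) = 1 := by
      rw [Module.Basis.baseChange_apply, hf]
      simp [basisOneIJK, B, QuaternionAlgebra.Basis.lift]
    have e1 : f (bs 1) = i := by
      rw [Module.Basis.baseChange_apply, hf]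
      simp [basisOneIJK, B, QuaternionAlgebra.Basis.lift]
    have e2 : f (bs 2) = j := by
      rw [Module.Basis.baseChange_apply, hf]
      simp [basisOneIJK, B, QuaternionAlgebra.Basis.lift]
    have e3 : f (bs 3) = i * j := by
      rw [Module.Basis.baseChange_apply, hf]
      simp [basisOneIJK, B, QuaternionAlgebra.Basis.lift]
    rw [e0, e1, e2, e3] at hz
    have := indep4 h2 i j (algebraMap K L a) (algebraMap K L b) (by simpa) (by simpa)
      (by rw [hi, IsScalarTower.algebraMap_apply K L R])
      (by rw [hj, IsScalarTower.algebraMap_apply K L R]) hij _ _ _ _ hz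
    simp [Fin.sum_univ_four, this]
  have hfr : Module.finrank L (L ⊗[K] ℍ[K, a, b]) = Module.finrank L R := by
    rw [hR, Module.finrank_baseChange, QuaternionAlgebra.finrank_eq_four]
  have hsurj : Function.Surjective f :=
    (LinearMap.injective_iff_surjective_of_finrank_eq_finrank (f := f.toLinearMap) hfr).1 hinj
  exact ⟨AlgEquiv.ofBijective f ⟨hinj, hsurj⟩⟩

theorem skolem_aux {L Q : Type*} [Field L] [Ring Q] [Nontrivial Q] [Algebra L Q]
    (h2 : (2 : L) ≠ 0) (hu : ∀ q : Q, q ≠ 0 → IsUnit q) (x y : L) (hx : x ≠ 0) (hy : y ≠ 0)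
    (i j I J : Q) (hi : i * i = x • 1) (hj : j * j = y • 1) (hij : j * i = -(i * j))
    (hI : I * I = x • 1) (hJ : J * J = y • 1) (hIJ : J * I = -(I * J)) :
    ∃ w w' : Q, w * w' = 1 ∧ w' * w = 1 ∧ I * w = w * i ∧ J * w = w * j := by
  let W : Q → Q := fun c => (x * y) • c + y • (I * (c * i)) + x • (J * (c * j))
    - I * (J * (c * (i * j)))
  have hII : ∀ z, I * (I * z) = x • z := fun z => by rw [← mul_assoc, hI, smul_mul_assoc, one_mul]
  have hJJ : ∀ z, J * (J * z) = y • z := fun z => by rw [← mul_assoc, hJ, smul_mul_assoc, one_mul]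
  have hJI : ∀ z, J * (I * z) = -(I * (J * z)) := fun z => by
    rw [← mul_assoc, hIJ, neg_mul, mul_assoc]
  have hii : ∀ z, i * (i * z) = x • z := fun z => by rw [← mul_assoc, hi, smul_mul_assoc, one_mul]
  have hjj : ∀ z, j * (j * z) = y • z := fun z => by rw [← mul_assoc, hj, smul_mul_assoc, one_mul]
  have hji : ∀ z, j * (i * z) = -(i * (j * z)) := fun z => by
    rw [← mul_assoc, hij, neg_mul, mul_assoc]
  have hW1 : ∀ c, I * W c = W c * i := by
    intro c
    simp only [W, mul_add, add_mul, mul_sub, sub_mul, mul_smul_comm, smul_mul_assoc, mul_assoc, hII,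
      hij, hji, hi, hii, mul_neg, mul_one]
    module
  have hW2 : ∀ c, J * W c = W c * j := by
    intro c
    simp only [W, mul_add, add_mul, mul_sub, sub_mul, mul_smul_comm, smul_mul_assoc, mul_assoc, hJJ,
      hJI, hj, mul_neg, mul_one]
    module
  have hex : ∃ c, W c ≠ 0 := by
    by_contra! h
    have e : (4 * x * y * x * y) • (1 : Q) = (x * y) • W 1 + y • (W i * i) + x • (W j * j)
        - (W (i * j) * (i * j)) := by
      simp only [W, mul_add, add_mul, mul_sub, sub_mul, mul_smul_comm, smul_mul_assoc, mul_assoc,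
        hij, hji, hi, hii, hj, hjj, mul_neg, mul_one, one_mul, smul_neg, smul_smul, neg_mul]
      module
    simp only [h, smul_zero, zero_mul, add_zero, sub_zero] at e
    have h4 : (4 : L) ≠ 0 := by
      have : (4 : L) = 2 * 2 := by norm_num
      rw [this]; exact mul_ne_zero h2 h2
    rcases smul_eq_zero.1 e with e | e
    · simp [h4, hx, hy] at e
    · exact one_ne_zero e
  obtain ⟨c, hc⟩ := hex
  obtain ⟨w, hw⟩ := hu _ hc
  exact ⟨w, (w⁻¹ : Qˣ), by simp, by simp, by rw [hw, hW1], by rw [hw, hW2]⟩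

theorem quat_decomp {L : Type*} [Field L] (x y : L) (q : ℍ[L, x, y]) :
    q = algebraMap L _ q.re + algebraMap L _ q.imI * (Basis.self L).i +
      algebraMap L _ q.imJ * (Basis.self L).j +
      algebraMap L _ q.imK * ((Basis.self L).i * (Basis.self L).j) := by
  simp only [← Algebra.smul_def]
  ext <;> simp

theorem skolem {L : Type*} [Field L] (x y : L) (h2 : (2 : L) ≠ 0) (hx : x ≠ 0) (hy : y ≠ 0)
    (hu : ∀ q : ℍ[L, x, y], q ≠ 0 → IsUnit q) (χ : ℍ[L, x, y] ≃+* ℍ[L, x, y])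
    (hχ : ∀ l, χ (algebraMap L _ l) = algebraMap L _ l) :
    ∃ w w' : ℍ[L, x, y], w * w' = 1 ∧ w' * w = 1 ∧ ∀ q, χ q * w = w * q := by
  let i := (Basis.self L : Basis ℍ[L, x, y] x 0 y).i
  let j := (Basis.self L : Basis ℍ[L, x, y] x 0 y).j
  have hi : i * i = x • 1 := by rw [Basis.i_mul_i]; simp
  have hj : j * j = y • 1 := by rw [Basis.j_mul_j]
  have hij : j * i = -(i * j) := by rw [Basis.j_mul_i, Basis.i_mul_j]; simp
  have hs : ∀ l : L, χ (l • 1) = l • 1 := fun l => by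
    rw [← Algebra.algebraMap_eq_smul_one, hχ]
  obtain ⟨w, w', h1, h3, h4, h5⟩ := skolem_aux h2 hu x y hx hy i j (χ i) (χ j) hi hj hij
    (by rw [← map_mul, hi, hs]) (by rw [← map_mul, hj, hs])
    (by rw [← map_mul, ← map_mul, hij, map_neg])
  refine ⟨w, w', h1, h3, fun q => ?_⟩
  rw [quat_decomp x y q]
  simp only [map_add, map_mul, hχ, add_mul, mul_add, mul_assoc]
  change _ + _ * (χ i * w) + _ * (χ j * w) + _ * (χ i * (χ j * w)) =
    _ + w * (_ * i) + w * (_ * j) + w * (_ * (i * j))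
  rw [h5, h4, ← mul_assoc (χ i), h4]
  simp only [← mul_assoc]
  simp only [Algebra.commutes _ w]

theorem quat_cent {L : Type*} [Field L] (x y : L) (h2 : (2 : L) ≠ 0) (hx : x ≠ 0) (hy : y ≠ 0)
    (q : ℍ[L, x, y]) (hq : ∀ p, q * p = p * q) : ∃ l : L, q = algebraMap L _ l := by
  have hi := hq ⟨0, 1, 0, 0⟩
  have hj := hq ⟨0, 0, 1, 0⟩
  rw [QuaternionAlgebra.ext_iff] at hi hj
  simp [eq_neg_iff_add_eq_zero, neg_eq_iff_add_eq_zero, ← two_mul, h2, hx, hy] at hi hj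
  refine ⟨q.re, ?_⟩
  ext <;> simp [hi, hj]

theorem star_comm {L Q : Type*} [Field L] [Ring Q] [Algebra L Q] [StarRing Q]
    (h2 : (2 : L) ≠ 0) (σ : L ≃+* L)
    (htr : ∀ q : Q, ∃ t : L, q + star q = algebraMap L Q t)
    (hnm : ∀ q : Q, ∃ t : L, q * star q = algebraMap L Q t)
    (hstarL : ∀ l, star (algebraMap L Q l) = algebraMap L Q l)
    (φ : Q ≃+* Q) (hφL : ∀ l, φ (algebraMap L Q l) = algebraMap L Q (σ l)) (q : Q) :
    φ (star q) = star (φ q) := by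
  have hpure : ∀ p : Q, star p = -p → star (φ p) = - φ p := by
    intro p hp
    obtain ⟨t, ht⟩ := htr (φ p)
    obtain ⟨N, hN⟩ := hnm (φ p)
    obtain ⟨n, hn⟩ := hnm p
    rw [hp] at hn
    have hpp : φ p * φ p = algebraMap L Q (-σ n) := by
      rw [map_neg, ← hφL, ← hn, ← map_mul, mul_neg, map_neg, neg_neg]
    by_cases h0 : t = 0
    · rw [h0, map_zero] at ht
      exact eq_neg_of_add_eq_zero_right ht
    · have h3 : t • φ p = algebraMap L Q (-σ n + N) := by
        rw [Algebra.smul_def, Algebra.commutes, ← ht, mul_add, hpp, hN, map_add]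
      have h4 : φ p = algebraMap L Q (t⁻¹ * (-σ n + N)) := by
        rw [map_mul, ← h3, ← Algebra.smul_def, smul_smul, inv_mul_cancel₀ h0, one_smul]
      obtain ⟨s, hs⟩ := σ.surjective (t⁻¹ * (-σ n + N))
      rw [← hs, ← hφL] at h4
      have h5 := φ.injective h4
      have h6 : p = -p := by rw [← hp, h5, hstarL]
      have h7 : (2 : L) • p = 0 := by
        rw [two_smul]
        nth_rewrite 2 [h6]
        exact add_neg_cancel p
      rw [smul_eq_zero_iff_right h2] at h7
      simp [h7]
  obtain ⟨t, ht⟩ := htr q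
  have e : star q = algebraMap L Q t - q := by rw [← ht, add_sub_cancel_left]
  have e2 : algebraMap L Q (t / 2) + algebraMap L Q (t / 2) = algebraMap L Q t := by
    rw [← map_add, ← two_mul, mul_div_cancel₀ _ h2]
  have h := hpure (q - algebraMap L Q (t / 2)) (by
    rw [star_sub, hstarL, e, ← e2]; abel)
  have e3 : φ (algebraMap L Q (t / 2)) + φ (algebraMap L Q (t / 2)) = φ (algebraMap L Q t) := by
    rw [← map_add, e2]
  rw [map_sub, star_sub, hφL, hstarL, ← hφL] at h
  rw [e, map_sub, ← e3, sub_eq_iff_eq_add.1 h]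
  abel

theorem descent {K L Q : Type*} [Field K] [Field L] [Algebra K L] [Ring Q] [Nontrivial Q]
    [Algebra L Q] [StarRing Q] 
    (h2 : (2 : L) ≠ 0) (σ : L ≃+* L) (hσ : ∀ l, σ l = l → ∃ k, l = algebraMap K L k)
    (d : L) (hd0 : d ≠ 0) (hd : σ d = -d)
    (hu : ∀ q : Q, q ≠ 0 → IsUnit q)
    (htr : ∀ q : Q, ∃ t : L, q + star q = algebraMap L Q t)
    (hnm : ∀ q : Q, ∃ t : L, q * star q = algebraMap L Q t)
    (hcent : ∀ q : Q, (∀ p, q * p = p * q) → ∃ l : L, q = algebraMap L Q l)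
    (hstarL : ∀ l, star (algebraMap L Q l) = algebraMap L Q l)
    (hp : ∃ p : Q, p ≠ 0 ∧ star p = -p)
    (φ : Q ≃+* Q) (hφL : ∀ l, φ (algebraMap L Q l) = algebraMap L Q (σ l))
    (hφφ : ∀ q, φ (φ q) = q) :
    ∃ (i j : Q) (a b : K), a ≠ 0 ∧ b ≠ 0 ∧ i * i = algebraMap L Q (algebraMap K L a) ∧
      j * j = algebraMap L Q (algebraMap K L b) ∧ j * i = -(i * j) := by
  have hφs := star_comm h2 σ htr hnm hstarL φ hφL
  have two : ∀ p : Q, p = -p → p = 0 := by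
    intro p h6
    have h7 : (2 : L) • p = 0 := by
      rw [two_smul]
      nth_rewrite 2 [h6]
      exact add_neg_cancel p
    rwa [smul_eq_zero_iff_right h2] at h7
  have fix : ∀ P : Q → Prop, (∀ p, P p → P (φ p)) → (∀ p q, P p → P q → P (p + q)) →
      (∀ (l : L) p, P p → P (l • p)) → (∃ p, p ≠ 0 ∧ P p) → ∃ p, p ≠ 0 ∧ P p ∧ φ p = p := by
    rintro P h1 h3 h4 ⟨p, hp0, hp⟩
    by_cases h : p + φ p = 0
    · refine ⟨d • p, ?_, h4 _ _ hp, ?_⟩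
      · rwa [Ne, smul_eq_zero_iff_right hd0]
      · rw [Algebra.smul_def, map_mul, hφL, hd, eq_neg_of_add_eq_zero_right h, map_neg, neg_mul_neg]
    · exact ⟨p + φ p, h, h3 _ _ hp (h1 _ hp), by rw [map_add, hφφ, add_comm]⟩
  have sq : ∀ p : Q, p ≠ 0 → star p = -p → φ p = p →
      ∃ a : K, a ≠ 0 ∧ p * p = algebraMap L Q (algebraMap K L a) := by
    intro p hp0 hp hφp
    obtain ⟨n, hn⟩ := hnm p
    have hpp : p * p = algebraMap L Q (-n) := by
      rw [map_neg, ← hn, hp, mul_neg, neg_neg]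
    have : σ (-n) = -n := by
      apply (algebraMap L Q).injective
      rw [← hφL, ← hpp, map_mul, hφp]
    obtain ⟨a, ha⟩ := hσ _ this
    refine ⟨a, ?_, by rw [hpp, ha]⟩
    rintro rfl
    rw [ha, map_zero, map_zero] at hpp
    exact hp0 ((hu p hp0).mul_left_eq_zero.1 hpp)
  have hss : ∀ (l : L) (p : Q), star (l • p) = l • star p := by
    intro l p
    rw [Algebra.smul_def, star_mul, hstarL, ← Algebra.commutes, ← Algebra.smul_def]
  obtain ⟨i, hi0, hi, hφi⟩ := fix (fun p => star p = -p)
    (fun p hp => by rw [← hφs, hp, map_neg])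
    (fun p q hp hq => by rw [star_add, hp, hq, neg_add])
    (fun l p hp => by rw [hss, hp, smul_neg]) hp
  obtain ⟨a, ha0, ha⟩ := sq i hi0 hi hφi
  have hnc : ∃ q, i * q - q * i ≠ 0 := by
    by_contra! h
    obtain ⟨l, hl⟩ := hcent i (fun p => sub_eq_zero.1 (h p))
    exact hi0 (two i (by rw [← hi, hl, hstarL]))
  obtain ⟨q, hq⟩ := hnc
  obtain ⟨t, ht⟩ := htr q
  have e : star q = algebraMap L Q t - q := by rw [← ht, add_sub_cancel_left]
  obtain ⟨j, hj0, ⟨hj, hji⟩, hφj⟩ := fix (fun p => star p = -p ∧ p * i = -(i * p))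
    (fun p hp => ⟨by rw [← hφs, hp.1, map_neg], by
      rw [← hφi, ← map_mul, ← map_mul, hp.2, map_neg]⟩)
    (fun p q hp hq => ⟨by rw [star_add, hp.1, hq.1, neg_add], by
      rw [add_mul, mul_add, hp.2, hq.2, neg_add]⟩)
    (fun l p hp => ⟨by rw [hss, hp.1, smul_neg], by
      rw [smul_mul_assoc, hp.2, mul_smul_comm, smul_neg]⟩) 
    ⟨i * q - q * i, hq, by
      rw [star_sub, star_mul, star_mul, hi, e, sub_mul, mul_sub, mul_neg, neg_mul, neg_mul, mul_neg,
        Algebra.commutes]; abel, by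
      rw [sub_mul, mul_sub, mul_assoc q, ha, ← Algebra.commutes, ← mul_assoc i i, ha, mul_assoc]
      abel⟩
  obtain ⟨b, hb0, hb⟩ := sq j hj0 hj hφj
  exact ⟨i, j, a, b, ha0, hb0, ha, hb, hji⟩

end QDesc

namespace QDesc
open QuaternionAlgebra

theorem quat_simple {L : Type*} [Field L] (x y : L) (h2 : (2 : L) ≠ 0) (hx : x ≠ 0) (hy : y ≠ 0) :
    IsSimpleRing ℍ[L, x, y] := by
  rw [isSimpleRing_iff_isTwoSided_imp]
  refine ⟨inferInstance, fun I hI => ?_⟩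
  have hL : ∀ p q : ℍ[L, x, y], q ∈ I → p * q ∈ I := fun p q h => I.mul_mem_left p h
  have hR : ∀ p q : ℍ[L, x, y], q ∈ I → q * p ∈ I := fun p q h => I.mul_mem_right p h
  have h4 : (4 : L) ≠ 0 := by
    have : (4 : L) = 2 * 2 := by norm_num
    rw [this]; exact mul_ne_zero h2 h2
  have main : ∀ q : ℍ[L, x, y], q ∈ I → q.re ≠ 0 → I = ⊤ := by
    intro q hq h0
    have e : (algebraMap L ℍ[L, x, y] (4 * q.re)) =
        q + (algebraMap L _ x⁻¹ * (⟨0, 1, 0, 0⟩ * (q * ⟨0, 1, 0, 0⟩)))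
          + (algebraMap L _ y⁻¹ * (⟨0, 0, 1, 0⟩ * (q * ⟨0, 0, 1, 0⟩)))
          + (algebraMap L _ (-(x * y)⁻¹) * (⟨0, 0, 0, 1⟩ * (q * ⟨0, 0, 0, 1⟩))) := by
      simp only [← Algebra.smul_def]
      ext
      · simp
        field_simp
        ring
      · simp
        field_simp
        ring
      · simp
        field_simp
        ring
      · simp
        field_simp
        ring
    have hm : (algebraMap L ℍ[L, x, y] (4 * q.re)) ∈ I := by
      rw [e]
      exact I.add_mem (I.add_mem (I.add_mem hq (hL _ _ (hL _ _ (hR _ _ hq))))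
        (hL _ _ (hL _ _ (hR _ _ hq)))) (hL _ _ (hL _ _ (hR _ _ hq)))
    rw [Ideal.eq_top_iff_one]
    have := hL (algebraMap L _ (4 * q.re)⁻¹) _ hm
    rwa [← map_mul, inv_mul_cancel₀ (mul_ne_zero h4 h0), map_one] at this
  by_cases hb : I = ⊥
  · exact Or.inl hb
  right
  obtain ⟨q, hq, hq0⟩ := Submodule.exists_mem_ne_zero_of_ne_bot hb
  by_cases h0 : q.re = 0
  · by_cases h1 : q.imI = 0
    · by_cases h3 : q.imJ = 0
      · by_cases h5 : q.imK = 0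
        · exact absurd (QuaternionAlgebra.ext h0 h1 h3 h5) hq0
        · exact main _ (hL ⟨0, 0, 0, 1⟩ _ hq) (by simp [*])
      · exact main _ (hL ⟨0, 0, 1, 0⟩ _ hq) (by simp [*])
    · exact main _ (hL ⟨0, 1, 0, 0⟩ _ hq) (by simp [*])
  · exact main q hq h0

theorem quat_split {K L : Type} [Field K] [Field L] [Algebra K L] (x y : L) (h2 : (2 : L) ≠ 0)
    (hx : x ≠ 0) (hy : y ≠ 0) :
    (∀ q : ℍ[L, x, y], q ≠ 0 → IsUnit q) ∨ Nonempty (L ⊗[K] ℍ[K, 1, 1] ≃ₐ[L] ℍ[L, x, y]) := by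
  have := quat_simple x y h2 hx hy
  have : IsArtinianRing ℍ[L, x, y] := IsArtinianRing.of_finite L _
  obtain ⟨n, hn, D, _, _, hfin, ⟨e⟩⟩ :=
    IsSimpleRing.exists_algEquiv_matrix_divisionRing_finite L ℍ[L, x, y]
  have hd : n * n * Module.finrank L D = 4 := by
    have := e.toLinearEquiv.finrank_eq
    rw [QuaternionAlgebra.finrank_eq_four, Module.finrank_matrix] at this
    simpa using this.symm
  have hn3 : n < 3 := by
    by_contra! h
    have hp : 0 < Module.finrank L D := Module.finrank_pos
    nlinarith
  have hn0 : n ≠ 0 := NeZero.ne n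
  obtain rfl | rfl : n = 1 ∨ n = 2 := by omega
  · left
    intro q hq
    let e' : ℍ[L, x, y] ≃+* D := e.toRingEquiv.trans (Matrix.uniqueRingEquiv (m := Fin 1))
    have : IsUnit (e' q) := by
      rw [isUnit_iff_ne_zero]; simpa using hq
    exact (MulEquiv.isUnit_map e'.toMulEquiv).1 this
  · right
    have hD : Module.finrank L D = 1 := by omega
    have hb : Function.Bijective (algebraMap L D) := by
      exact Algebra.finrank_eq_one_iff_bijective_algebraMap.mp hD
    let g : L ≃ₐ[L] D := AlgEquiv.ofBijective (Algebra.ofId L D) hb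
    obtain ⟨f⟩ := quat_iso (K := K) (L := L) (R := Matrix (Fin 2) (Fin 2) L) h2
      (by simp [Module.finrank_matrix]) !![1, 0; 0, -1] !![0, 1; 1, 0] 1 1 one_ne_zero one_ne_zero
      (by simp [Matrix.one_fin_two]) (by simp [Matrix.one_fin_two]) (by simp)
    exact ⟨f.trans ((g.mapMatrix (m := Fin 2)).trans e.symm)⟩
end QDesc

namespace QDesc

theorem mlr_bij (K B : Type*) [Field K] [Ring B] [Algebra K B] [FiniteDimensional K B]
    [Algebra.IsCentral K B] [IsSimpleRing B] :
    Function.Bijective (AlgHom.mulLeftRight K B) := by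
  classical
  let _ : Module (B ⊗[K] Bᵐᵒᵖ) B := TensorProduct.Algebra.module
  have hsm : ∀ (r : B ⊗[K] Bᵐᵒᵖ) (z : B), AlgHom.mulLeftRight K B r z = r • z := fun r z => rfl
  have hs : ∀ (a : B) (b : Bᵐᵒᵖ) (z : B), (a ⊗ₜ[K] b) • z = a * z * b.unop := fun a b z => by
    rw [← hsm, AlgHom.mulLeftRight_apply]
  have : IsSimpleModule (B ⊗[K] Bᵐᵒᵖ) B := by
    rw [isSimpleModule_iff]
    have h0 := (isSimpleRing_iff_isTwoSided_imp.1 ‹IsSimpleRing B›).2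
    refine { exists_pair_ne := ⟨⊥, ⊤, ?_⟩, eq_bot_or_eq_top := ?_ }
    · intro h
      have : (1 : B) ∈ (⊥ : Submodule (B ⊗[K] Bᵐᵒᵖ) B) := by rw [h]; trivial
      exact one_ne_zero ((Submodule.mem_bot _).1 this)
    · intro N
      let I : Ideal B :=
        { carrier := N, add_mem' := fun h h' => N.add_mem h h', zero_mem' := N.zero_mem
          smul_mem' := fun c z hz => by
            have := N.smul_mem (c ⊗ₜ[K] 1) hz
            rw [hs] at this
            simpa using this }
      have hI : I.IsTwoSided := ⟨fun {a} b ha => by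
            have := N.smul_mem (1 ⊗ₜ[K] MulOpposite.op b) ha
            rw [hs] at this
            have h3 : a * b ∈ N := by simpa using this
            exact h3⟩
      rcases h0 I hI with h | h
      · left
        rw [eq_bot_iff]
        intro z hz
        have : z ∈ I := hz
        rw [h] at this
        simpa using this
      · right
        rw [eq_top_iff]
        intro z _
        have : z ∈ I := by rw [h]; trivial
        exact this
  have hcent : ∀ g : Module.End (B ⊗[K] Bᵐᵒᵖ) B, ∃ k : K, ∀ z, g z = k • z := by
    intro g
    have h1 : ∀ z, g z = z * g 1 := fun z => by
      have := g.map_smul (z ⊗ₜ[K] 1) 1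
      rw [hs, hs] at this
      simpa using this
    have h2 : ∀ z, g z = g 1 * z := fun z => by
      have := g.map_smul (1 ⊗ₜ[K] MulOpposite.op z) 1
      rw [hs, hs] at this
      simpa using this
    have hm : g 1 ∈ Subalgebra.center K B := by
      rw [Subalgebra.mem_center_iff]
      intro b
      rw [← h1, ← h2]
    obtain ⟨k, hk⟩ := Algebra.mem_bot.1 (Algebra.IsCentral.out hm)
    exact ⟨k, fun z => by rw [h2, ← hk, Algebra.smul_def]⟩
  have hsurj : Function.Surjective (AlgHom.mulLeftRight K B) := by
    intro f
    let F : Module.End (Module.End (B ⊗[K] Bᵐᵒᵖ) B) B :=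
      { toFun := f, map_add' := f.map_add
        map_smul' := fun g z => by
          obtain ⟨k, hk⟩ := hcent g
          change f (g z) = g (f z)
          rw [hk, hk, map_smul] }
    let bs := Module.finBasis K B
    obtain ⟨r, hr⟩ := jacobson_density F (Finset.univ.image bs)
    refine ⟨r, bs.ext fun i => ?_⟩
    rw [hsm, ← hr _ (by simp)]
    rfl
  refine ⟨?_, hsurj⟩
  refine (LinearMap.injective_iff_surjective_of_finrank_eq_finrank
    (f := (AlgHom.mulLeftRight K B).toLinearMap) ?_).2 hsurj
  rw [Module.finrank_tensorProduct, Module.finrank_linearMap]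
  congr 1
  exact (MulOpposite.opLinearEquiv K).symm.finrank_eq

theorem op_chain (K B C : Type) [Field K] [Ring B] [Algebra K B] [Ring C] [Algebra K C]
    (r s d : ℕ) (e : Matrix (Fin r) (Fin r) (B ⊗[K] B) ≃ₐ[K] Matrix (Fin s) (Fin s) K)
    (e1 : B ⊗[K] C ≃ₐ[K] Matrix (Fin d) (Fin d) K) :
    Nonempty (Matrix (Fin s) (Fin s) C ≃ₐ[K] Matrix (Fin r × Fin d) (Fin r × Fin d) B) := by
  -- `M_s(Bᵒᵖ) ≅ M_s(K) ⊗ Bᵒᵖ`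
  let e2 : Matrix (Fin s) (Fin s) K ⊗[K] C ≃ₐ[K] Matrix (Fin s) (Fin s) C :=
    (Algebra.TensorProduct.comm K _ _).trans (matrixEquivTensor (Fin s) K C).symm
  let e3 : Matrix (Fin r) (Fin r) (B ⊗[K] B) ⊗[K] C ≃ₐ[K]
      Matrix (Fin s) (Fin s) K ⊗[K] C :=
    Algebra.TensorProduct.congr e AlgEquiv.refl
  let e4 : Matrix (Fin r) (Fin r) (B ⊗[K] B) ⊗[K] C ≃ₐ[K]
      Matrix (Fin r) (Fin r) K ⊗[K] (B ⊗[K] (B ⊗[K] C)) :=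
    (Algebra.TensorProduct.congr ((matrixEquivTensor (Fin r) K (B ⊗[K] B)).trans
      (Algebra.TensorProduct.comm K _ _)) AlgEquiv.refl).trans
      ((Algebra.TensorProduct.assoc K K K _ _ _).trans
        (Algebra.TensorProduct.congr AlgEquiv.refl (Algebra.TensorProduct.assoc K K K _ _ _)))
  let e5 : Matrix (Fin r) (Fin r) K ⊗[K] (B ⊗[K] (B ⊗[K] C)) ≃ₐ[K]
     Matrix (Fin r) (Fin r) K ⊗[K] Matrix (Fin d) (Fin d) B :=
    Algebra.TensorProduct.congr AlgEquiv.refl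
      ((Algebra.TensorProduct.congr AlgEquiv.refl e1).trans (matrixEquivTensor (Fin d) K B).symm)
  let e6 : Matrix (Fin r) (Fin r) K ⊗[K] Matrix (Fin d) (Fin d) B ≃ₐ[K]
      Matrix (Fin r × Fin d) (Fin r × Fin d) B :=
    (Matrix.kroneckerTMulAlgEquiv (Fin r) (Fin d) K K K B).trans
      (Algebra.TensorProduct.lid K B).mapMatrix
  exact ⟨e2.symm.trans (e3.symm.trans (e4.trans (e5.trans e6)))⟩

theorem exists_op (K B : Type) [Field K] [Ring B] [Algebra K B] [FiniteDimensional K B]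
    [Algebra.IsCentral K B] [IsSimpleRing B] (htors : BrauerEquivalent K (B ⊗[K] B) K) :
    ∃ s : ℕ, 0 < s ∧
      Nonempty (Matrix (Fin s) (Fin s) B ≃ₐ[K] (Matrix (Fin s) (Fin s) B)ᵐᵒᵖ) := by
  obtain ⟨r, s, hr, hs, ⟨e⟩⟩ := htors
  let d := Module.finrank K B
  have hd : 0 < d := Module.finrank_pos
  let e1 : B ⊗[K] Bᵐᵒᵖ ≃ₐ[K] Matrix (Fin d) (Fin d) K :=
    (AlgEquiv.ofBijective _ (mlr_bij K B)).trans
      (LinearMap.toMatrixAlgEquiv (Module.finBasis K B))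
  obtain ⟨e7⟩ := op_chain K B Bᵐᵒᵖ r s d e e1
  have hsd : s = r * d := by
    have := e7.toLinearEquiv.finrank_eq
    have h' : Module.finrank K Bᵐᵒᵖ = d := (MulOpposite.opLinearEquiv K).symm.finrank_eq
    rw [Module.finrank_matrix, Module.finrank_matrix, h'] at this
    simp only [Fintype.card_prod, Fintype.card_fin] at this
    have := Nat.eq_of_mul_eq_mul_right hd this
    nlinarith [Nat.mul_self_inj.1 this]
  have e8 : Fin r × Fin d ≃ Fin s := finProdFinEquiv.trans (finCongr hsd.symm)
  exact ⟨s, hs, ⟨((Matrix.reindexAlgEquiv K B e8).symm.trans e7.symm).trans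
    AlgEquiv.mopMatrix⟩⟩

end QDesc

namespace QDesc

theorem exists_sigma (K L : Type) [Field K] [Field L] [Algebra K L] (h2 : (2 : K) ≠ 0)
    (hquad : Module.finrank K L = 2) :
    ∃ σ : L ≃ₐ[K] L, (∀ l, σ (σ l) = l) ∧ (∀ l, σ l = l → ∃ k, l = algebraMap K L k) ∧
      ∃ d, d ≠ 0 ∧ σ d = -d := by
  have : FiniteDimensional K L := Module.finite_of_finrank_pos (by omega)
  have : Algebra.IsQuadraticExtension K L := ⟨hquad⟩
  have hsep : Algebra.IsSeparable K L := by
    refine ⟨fun l => ?_⟩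
    have hint : IsIntegral K l := IsIntegral.of_finite K l
    rw [IsSeparable, Polynomial.separable_iff_derivative_ne_zero (minpoly.irreducible hint)]
    intro h0
    have hdvd := minpoly.degree_dvd hint
    rw [hquad] at hdvd
    have hc := congrArg (fun p => Polynomial.coeff p ((minpoly K l).natDegree - 1)) h0
    have hp := minpoly.natDegree_pos hint
    have hm := (minpoly.monic hint).coeff_natDegree
    simp only [Polynomial.coeff_derivative, Polynomial.coeff_zero] at hc
    rcases (Nat.dvd_prime Nat.prime_two).1 hdvd with h | h
    · rw [h] at hc hm
      simp [hm] at hc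
    · rw [h] at hc hm
      norm_num [hm] at hc
      exact h2 hc
  have hgal : IsGalois K L := inferInstance
  have hcard : Nat.card (L ≃ₐ[K] L) = 2 := by rw [IsGalois.card_aut_eq_finrank, hquad]
  obtain ⟨σ, hσ, huniq⟩ := (Nat.card_eq_two_iff' (1 : L ≃ₐ[K] L)).1 hcard
  have hsq : σ * σ = 1 := by
    by_contra h
    have := huniq _ h
    exact hσ (by simpa using this)
  refine ⟨σ, fun l => by simpa using DFunLike.congr_fun hsq l, fun l hl => ?_, ?_⟩
  · have : l ∈ (⊥ : IntermediateField K L) := by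
      rw [IsGalois.mem_bot_iff_fixed]
      intro τ
      by_cases h : τ = 1
      · simp [h]
      · rw [huniq τ h, hl]
    obtain ⟨k, hk⟩ := IntermediateField.mem_bot.1 this
    exact ⟨k, hk.symm⟩
  · have : ∃ l, σ l ≠ l := by
      by_contra! h
      exact hσ (AlgEquiv.ext h)
    obtain ⟨l, hl⟩ := this
    refine ⟨l - σ l, sub_ne_zero.2 (Ne.symm hl), ?_⟩
    have : σ (σ l) = l := by simpa using DFunLike.congr_fun hsq l
    rw [map_sub, this]; ring

theorem abs_case {K L C ι : Type} [Field K] [Field L] [Algebra K L] [Ring C] [Algebra K C]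
    [Fintype ι] [DecidableEq ι] [Nonempty ι]
    (x y : L) (h2 : (2 : L) ≠ 0) (hx : x ≠ 0) (hy : y ≠ 0)
    (σ : L ≃ₐ[K] L) (hσ2 : ∀ l, σ (σ l) = l) (hσ : ∀ l, σ l = l → ∃ k, l = algebraMap K L k)
    (d : L) (hd0 : d ≠ 0) (hd : σ d = -d)
    (hu : ∀ q : ℍ[L, x, y], q ≠ 0 → IsUnit q)
    (g : C ≃ₐ[K] Cᵐᵒᵖ) (E : L ⊗[K] C ≃ₐ[L] Matrix ι ι ℍ[L, x, y]) :
    ∃ a b : K, a ≠ 0 ∧ b ≠ 0 ∧ Nonempty (L ⊗[K] ℍ[K, a, b] ≃ₐ[L] ℍ[L, x, y]) := by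
  have htr : ∀ q : ℍ[L, x, y], ∃ t : L, q + star q = algebraMap L _ t := fun q =>
    ⟨_, QuaternionAlgebra.self_add_star' q⟩
  have hnm : ∀ q : ℍ[L, x, y], ∃ t : L, q * star q = algebraMap L _ t := fun q =>
    ⟨_, QuaternionAlgebra.mul_star_eq_coe q⟩
  have hstarL : ∀ l, star (algebraMap L ℍ[L, x, y] l) = algebraMap L _ l := fun l =>
    QuaternionAlgebra.star_coe l
  have hcent := quat_cent x y h2 hx hy
  have hsc : ∀ l, Matrix.scalar ι (algebraMap L ℍ[L, x, y] l) = algebraMap L _ l := fun l => rfl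
  have hEl : ∀ l, E.symm (algebraMap L _ l) = l ⊗ₜ 1 := fun l => by
    rw [AlgEquiv.commutes]; rfl
  have hEl' : ∀ l : L, E (l ⊗ₜ 1) = algebraMap L _ l := fun l => by
    rw [← hEl, AlgEquiv.apply_symm_apply]
  have hreg : ∀ G : Matrix ι ι ℍ[L, x, y], (∀ X, G * X = 0 → X = 0) → IsUnit G := by
    intro G hG
    have hinj : Function.Injective (LinearMap.mulLeft L G) :=
      (injective_iff_map_eq_zero _).2 hG
    have hsurj := LinearMap.injective_iff_surjective.1 hinj
    obtain ⟨H, hH⟩ := hsurj 1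
    have h1 : G * H = 1 := hH
    have h3 : H * G = 1 := by
      apply hinj
      change G * (H * G) = G * 1
      rw [← mul_assoc, h1, one_mul, mul_one]
    exact ⟨⟨G, H, h1, h3⟩, rfl⟩
  let θ₀ : L ⊗[K] C ≃ₐ[K] L ⊗[K] C := Algebra.TensorProduct.congr σ AlgEquiv.refl
  let γ₀ : L ⊗[K] C ≃ₐ[K] (L ⊗[K] C)ᵐᵒᵖ :=
    (Algebra.TensorProduct.congr (AlgEquiv.toOpposite K L) g).trans
      (Algebra.TensorProduct.opAlgEquiv K K L C)
  have hθt : ∀ l c, θ₀ (l ⊗ₜ c) = σ l ⊗ₜ c := fun l c => rfl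
  have hγt : ∀ l c, (γ₀ (l ⊗ₜ c)).unop = l ⊗ₜ (g c).unop := fun l c => rfl
  have hθ₀2 : ∀ z, θ₀ (θ₀ z) = z := by
    intro z
    induction z with
    | zero => simp
    | tmul l c => rw [hθt, hθt, hσ2]
    | add u v hu hv => rw [map_add, map_add, hu, hv]
  have hγθ₀ : ∀ z, (γ₀ (θ₀ z)).unop = θ₀ (γ₀ z).unop := by
    intro z
    induction z with
    | zero => simp
    | tmul l c => rw [hθt, hγt, hγt, hθt]
    | add u v hu hv =>
      rw [map_add, map_add, MulOpposite.unop_add, hu, hv, map_add, MulOpposite.unop_add, map_add]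
  let Er : L ⊗[K] C ≃+* Matrix ι ι ℍ[L, x, y] := E.toRingEquiv
  let θ : Matrix ι ι ℍ[L, x, y] ≃+* Matrix ι ι ℍ[L, x, y] :=
    Er.symm.trans (θ₀.toRingEquiv.trans Er)
  let γ : Matrix ι ι ℍ[L, x, y] ≃+* (Matrix ι ι ℍ[L, x, y])ᵐᵒᵖ :=
    Er.symm.trans (γ₀.toRingEquiv.trans (RingEquiv.op Er))
  have hθa : ∀ X, θ X = E (θ₀ (E.symm X)) := fun X => rfl
  have hγa : ∀ X, (γ X).unop = E (γ₀ (E.symm X)).unop := fun X => rfl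
  have hstar : ∀ φ : ℍ[L, x, y] ≃+* ℍ[L, x, y],
      (∀ l, φ (algebraMap L _ l) = algebraMap L _ (σ.toRingEquiv l)) →
      ∀ q, φ (star q) = star (φ q) := fun φ hφ q =>
    star_comm h2 σ.toRingEquiv htr hnm hstarL φ hφ q
  obtain ⟨φ, u, m, hφL, hu0, hu1, hu3, hn⟩ := key σ.toRingEquiv hu hreg hcent
    (skolem x y h2 hx hy hu) hstar hstarL θ
    (fun X => by rw [hθa, hθa, AlgEquiv.symm_apply_apply, hθ₀2, AlgEquiv.apply_symm_apply])
    (fun l => by rw [hsc, hsc, hθa, hEl, hθt, hEl']; rfl) γ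
    (fun l => by rw [hsc, hγa, hEl, hγt, map_one, MulOpposite.unop_one, hEl'])
    (fun X => by
      rw [hγa, hθa, hθa, hγa, AlgEquiv.symm_apply_apply, AlgEquiv.symm_apply_apply, hγθ₀])
  obtain ⟨ψ, hψL, hψψ⟩ := key2 σ.toRingEquiv hu htr φ u m hφL hu0 hu1 hu3 hn
  obtain ⟨i, j, a, b, ha, hb, hi, hj, hij⟩ := descent (K := K) h2 σ.toRingEquiv hσ d hd0 hd hu htr
    hnm hcent hstarL ⟨⟨0, 1, 0, 0⟩, fun h => by
      have := congrArg QuaternionAlgebra.imI h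
      simp at this, by ext <;> simp⟩ ψ hψL hψψ
  exact ⟨a, b, ha, hb, quat_iso h2 (QuaternionAlgebra.finrank_eq_four ..) i j a b ha hb
    (by rw [hi, ← IsScalarTower.algebraMap_apply]) (by rw [hj, ← IsScalarTower.algebraMap_apply])
    hij⟩

theorem base_matrix (K L B Q : Type) [Field K] [Field L] [Algebra K L] [Ring B] [Algebra K B]
    [Ring Q] [Algebra L Q] (n m s : ℕ)
    (e : Matrix (Fin n) (Fin n) (L ⊗[K] B) ≃ₐ[L] Matrix (Fin m) (Fin m) Q) :
    Nonempty (L ⊗[K] Matrix (Fin n) (Fin n) (Matrix (Fin s) (Fin s) B) ≃ₐ[L]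
      Matrix (Fin s × Fin m) (Fin s × Fin m) Q) := by
  let e1 : L ⊗[K] Matrix (Fin n) (Fin n) (Matrix (Fin s) (Fin s) B) ≃ₐ[L]
      Matrix Unit Unit L ⊗[K] Matrix (Fin n × Fin s) (Fin n × Fin s) B :=
    Algebra.TensorProduct.congr (Matrix.uniqueAlgEquiv (m := Unit)).symm
      (Matrix.compAlgEquiv (Fin n) (Fin s) B K)
  let e2 := Matrix.kroneckerTMulAlgEquiv Unit (Fin n × Fin s) K L L B
  let e3 : Matrix (Unit × (Fin n × Fin s)) (Unit × (Fin n × Fin s)) (L ⊗[K] B) ≃ₐ[L] _ :=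
    Matrix.reindexAlgEquiv L (L ⊗[K] B) ((Equiv.punitProd _).trans (Equiv.prodComm (Fin n) (Fin s)))
  let e4 := (Matrix.compAlgEquiv (Fin s) (Fin n) (L ⊗[K] B) L).symm
  let e5 := (e.mapMatrix (m := Fin s)).trans (Matrix.compAlgEquiv (Fin s) (Fin m) Q L)
  exact ⟨e1.trans (e2.trans (e3.trans (e4.trans e5)))⟩

end QDesc

/-- Let `K` be a field of characteristic different from `2` and `L/K` a
quadratic field extension.  Let `B` be a central simple `K`-algebra whose Brauer class is
`2`-torsion, and suppose that `B ⊗_K L` is Brauer-equivalent to a quaternion algebra over `L`.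
Then there are `a, b ∈ K^×` such that `(a,b)_L = (a,b)_K ⊗_K L` is Brauer-equivalent
to `B ⊗_K L`. -/
theorem quaternion_class_descends
    (K L : Type) [Field K] [Field L] [Algebra K L]
    (hchar : ringChar K ≠ 2) (hquad : Module.finrank K L = 2)
    (B : Type) [Ring B] [Algebra K B] [FiniteDimensional K B]
    [Algebra.IsCentral K B] [IsSimpleRing B]
    (htors : BrauerEquivalent K (B ⊗[K] B) K)
    (x y : L) (hx : x ≠ 0) (hy : y ≠ 0)
    (hquat : BrauerEquivalent L (L ⊗[K] B) ℍ[L, x, y]) :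
    ∃ a b : K, a ≠ 0 ∧ b ≠ 0 ∧
      BrauerEquivalent L (L ⊗[K] ℍ[K, a, b]) (L ⊗[K] B) := by
  have h2 : (2 : K) ≠ 0 := Ring.two_ne_zero hchar
  have h2L : (2 : L) ≠ 0 := by
    have := (map_ne_zero (algebraMap K L)).2 h2
    rwa [map_ofNat] at this
  obtain ⟨n, m, hn, hm, ⟨e⟩⟩ := hquat
  have fin : ∃ a b : K, a ≠ 0 ∧ b ≠ 0 ∧ Nonempty (L ⊗[K] ℍ[K, a, b] ≃ₐ[L] ℍ[L, x, y]) := by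
    rcases QDesc.quat_split (K := K) x y h2L hx hy with hu | hs
    · obtain ⟨σ, hσ2, hσ, d, hd0, hd⟩ := QDesc.exists_sigma K L h2 hquad
      obtain ⟨s, hs, ⟨g⟩⟩ := QDesc.exists_op K B htors
      obtain ⟨E⟩ := QDesc.base_matrix K L B ℍ[L, x, y] n m s e
      have : Nonempty (Fin s × Fin m) := ⟨(⟨0, hs⟩, ⟨0, hm⟩)⟩
      exact QDesc.abs_case x y h2L hx hy σ hσ2 hσ d hd0 hd hu
        ((g.mapMatrix (m := Fin n)).trans AlgEquiv.mopMatrix) E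
    · exact ⟨1, 1, one_ne_zero, one_ne_zero, hs⟩
  obtain ⟨a, b, ha, hb, ⟨f⟩⟩ := fin
  exact ⟨a, b, ha, hb, m, n, hm, hn, ⟨(f.mapMatrix (m := Fin m)).trans e.symm⟩⟩
end

section
/- Let K be a field of characteristic different from 2, let d ∈ K^× be a non-square, and let L = K(√d). Let Q₁ and Q₂ be quaternion algebras over K such that the biquaternion algebra Q₁ ⊗_K Q₂ is a division algebra, and suppose that (Q₁ ⊗_K Q₂) ⊗_K L is Brauer-equivalent to a quaternion algebra over L. Then there exist a, b, c ∈ K^× such that Q₁ ⊗_K Q₂ is Brauer-equivalent to (a,b)_K ⊗_K (c,d)_K; in particular, the class of Q₁ ⊗_K Q₂ in Br(K) equals the sum of the classes of the quaternion algebras (a,b)_K and (c,d)_K. -/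
open scoped TensorProduct Quaternion

lemma bq_indep {D : Type*} [Ring D] [NoZeroDivisors D] (h2 : (2 : D) ≠ 0) {I J Y0 Y1 Y2 Y3 : D}
    (hI : I ≠ 0) (hJ : J ≠ 0) (hIJ : J * I = -(I * J))
    (h0 : Y0 * I = I * Y0) (h1 : Y1 * I = I * Y1) (h2' : Y2 * I = I * Y2) (h3 : Y3 * I = I * Y3)
    (k0 : Y0 * J = J * Y0) (k1 : Y1 * J = J * Y1) (k2 : Y2 * J = J * Y2) (k3 : Y3 * J = J * Y3)
    (h : Y0 + I * Y1 + J * Y2 + I * J * Y3 = 0) : Y0 = 0 ∧ Y1 = 0 ∧ Y2 = 0 ∧ Y3 = 0 := by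
  have dbl : ∀ x : D, x + x = 0 → x = 0 := by
    intro x hx
    rw [← two_mul] at hx
    exact (mul_eq_zero.1 hx).resolve_left h2
  have eI : (Y0 + I * Y1 - J * Y2 - I * J * Y3) * I = 0 := by
    have : (Y0 + I * Y1 - J * Y2 - I * J * Y3) * I = I * (Y0 + I * Y1 + J * Y2 + I * J * Y3) := by
      simp only [add_mul, sub_mul, mul_add, mul_assoc, h0, h1, h2', h3]
      simp only [← mul_assoc, hIJ]
      simp only [mul_assoc, neg_mul, ]
      simp only [neg_mul, mul_neg, mul_assoc]; abel
    rw [this, h, mul_zero]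
  have eI' := (mul_eq_zero.1 eI).resolve_right hI
  have eA : Y0 + I * Y1 = 0 := by
    apply dbl
    have := congrArg₂ (· + ·) h eI'
    simp only [add_zero] at this
    rw [← this]; abel
  have eB : J * (Y2 - I * Y3) = 0 := by
    rw [eA] at h
    rw [mul_sub, ← mul_assoc, hIJ, ← h]; noncomm_ring
  have eB' := (mul_eq_zero.1 eB).resolve_left hJ
  have key : ∀ A B : D, A * J = J * A → B * J = J * B → A + I * B = 0 → A = 0 ∧ B = 0 := by
    intro A B hA hB hAB
    have e : J * (A - I * B) = 0 := by
      have : J * (A - I * B) = (A + I * B) * J := by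
        rw [mul_sub, ← mul_assoc, hIJ, add_mul, hA, mul_assoc I B, hB]; noncomm_ring
      rw [this, hAB, zero_mul]
    have e' := (mul_eq_zero.1 e).resolve_left hJ
    have hA0 : A = 0 := dbl _ (by
      have := congrArg₂ (· + ·) hAB e'
      simp only [add_zero] at this
      rw [← this]; abel)
    refine ⟨hA0, ?_⟩
    rw [hA0, zero_add] at hAB
    exact (mul_eq_zero.1 hAB).resolve_left hI
  obtain ⟨a, b⟩ := key _ _ k0 k1 eA
  obtain ⟨c, e⟩ := key Y2 (-Y3) k2 (by rw [neg_mul, k3, mul_neg]) (by rw [mul_neg, ← sub_eq_add_neg, eB'])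
  exact ⟨a, b, c, neg_eq_zero.1 e⟩

lemma bq_quat_dec {K : Type*} [Field K] (a b : K) (q : ℍ[K, a, b]) :
    q = q.re • (1 : ℍ[K, a, b]) + q.imI • (⟨0,1,0,0⟩ : ℍ[K, a, b]) + q.imJ • (⟨0,0,1,0⟩ : ℍ[K, a, b])
      + q.imK • (⟨0,0,0,1⟩ : ℍ[K, a, b]) := by
  ext <;> simp

lemma bq_tensor_dec {K : Type*} [Field K] (a b : K) {B : Type*} [Ring B] [Algebra K B]
    (z : ℍ[K, a, b] ⊗[K] B) : ∃ y0 y1 y2 y3 : B,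
      z = (1 : ℍ[K, a, b]) ⊗ₜ y0 + (⟨0,1,0,0⟩ : ℍ[K, a, b]) ⊗ₜ y1 + (⟨0,0,1,0⟩ : ℍ[K, a, b]) ⊗ₜ y2
      + (⟨0,0,0,1⟩ : ℍ[K, a, b]) ⊗ₜ y3 := by
  induction z using TensorProduct.induction_on with
  | zero => exact ⟨0,0,0,0, by simp⟩
  | tmul x y =>
    refine ⟨x.re • y, x.imI • y, x.imJ • y, x.imK • y, ?_⟩
    conv_lhs => rw [bq_quat_dec a b x]
    simp only [TensorProduct.add_tmul, TensorProduct.smul_tmul]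
  | add x y hx hy =>
    obtain ⟨p0,p1,p2,p3,hp⟩ := hx
    obtain ⟨q0,q1,q2,q3,hq⟩ := hy
    refine ⟨p0+q0,p1+q1,p2+q2,p3+q3, ?_⟩
    rw [hp, hq]
    simp only [TensorProduct.tmul_add]; abel

/-- two commuting quaternion pairs in a domain give an embedding of the tensor product -/
lemma bq_embed {K D : Type*} [Field K] [Ring D] [Algebra K D] [NoZeroDivisors D] [Nontrivial D]
    (h2 : (2 : D) ≠ 0) (a b c d : K) (ha : a ≠ 0) (hb : b ≠ 0) (hc : c ≠ 0) (hd : d ≠ 0)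
    (I J U W : D) (hI : I * I = algebraMap K D a) (hJ : J * J = algebraMap K D b)
    (hU : U * U = algebraMap K D c) (hW : W * W = algebraMap K D d)
    (hIJ : J * I = -(I * J)) (hUW : W * U = -(U * W))
    (hIU : I * U = U * I) (hIW : I * W = W * I) (hJU : J * U = U * J) (hJW : J * W = W * J) :
    ∃ f : ℍ[K, a, b] ⊗[K] ℍ[K, c, d] →ₐ[K] D, Function.Injective f := by
  have nz : ∀ {x : D} {r : K}, r ≠ 0 → x * x = algebraMap K D r → x ≠ 0 := by
    rintro x r hr hx rfl
    rw [mul_zero] at hx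
    exact hr ((map_eq_zero_iff _ (algebraMap K D).injective).1 hx.symm)
  let B1 : QuaternionAlgebra.Basis D a 0 b :=
    { i := I, j := J, k := I * J
      i_mul_i := by rw [hI, Algebra.algebraMap_eq_smul_one]; simp
      j_mul_j := by rw [hJ, Algebra.algebraMap_eq_smul_one]
      i_mul_j := rfl
      j_mul_i := by rw [hIJ]; simp }
  let B2 : QuaternionAlgebra.Basis D c 0 d :=
    { i := U, j := W, k := U * W
      i_mul_i := by rw [hU, Algebra.algebraMap_eq_smul_one]; simp
      j_mul_j := by rw [hW, Algebra.algebraMap_eq_smul_one]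
      i_mul_j := rfl
      j_mul_i := by rw [hUW]; simp }
  let f1 := B1.liftHom
  let f2 := B2.liftHom
  have f1v : ∀ q, f1 q = algebraMap K D q.re + q.imI • I + q.imJ • J + q.imK • (I * J) := fun q => rfl
  have f2v : ∀ q, f2 q = algebraMap K D q.re + q.imI • U + q.imJ • W + q.imK • (U * W) := fun q => rfl
  have cI : ∀ q, f2 q * I = I * f2 q := by
    intro q
    rw [f2v]
    simp only [add_mul, mul_add, smul_mul_assoc, mul_smul_comm, Algebra.commutes, ← hIU, ← hIW]
    rw [mul_assoc U W I, ← hIW, ← mul_assoc, ← hIU, mul_assoc]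
  have cJ : ∀ q, f2 q * J = J * f2 q := by
    intro q
    rw [f2v]
    simp only [add_mul, mul_add, smul_mul_assoc, mul_smul_comm, Algebra.commutes, ← hJU, ← hJW]
    rw [mul_assoc U W J, ← hJW, ← mul_assoc, ← hJU, mul_assoc]
  have cf : ∀ p q, Commute (f1 p) (f2 q) := by
    intro p q
    have h1 : Commute I (f2 q) := (cI q).symm
    have h2 : Commute J (f2 q) := (cJ q).symm
    rw [f1v]
    exact (((Algebra.commute_algebraMap_left _ _).add_left (h1.smul_left _)).add_left
      (h2.smul_left _)).add_left ((h1.mul_left h2).smul_left _)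
  have inj2 : ∀ q, f2 q = 0 → q = 0 := by
    intro q hq
    have := bq_indep h2 (I := U) (J := W) (Y0 := algebraMap K D q.re) (Y1 := algebraMap K D q.imI)
      (Y2 := algebraMap K D q.imJ) (Y3 := algebraMap K D q.imK) (nz hc hU) (nz hd hW) hUW
      (Algebra.commutes _ _) (Algebra.commutes _ _) (Algebra.commutes _ _) (Algebra.commutes _ _)
      (Algebra.commutes _ _) (Algebra.commutes _ _) (Algebra.commutes _ _) (Algebra.commutes _ _)
      (by
        rw [← hq, f2v]
        simp only [Algebra.smul_def, Algebra.commutes])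
    simp only [map_eq_zero_iff _ (algebraMap K D).injective] at this
    ext <;> simp [this]
  refine ⟨Algebra.TensorProduct.lift f1 f2 cf, ?_⟩
  rw [injective_iff_map_eq_zero]
  intro z hz
  obtain ⟨y0, y1, y2, y3, rfl⟩ := bq_tensor_dec a b z
  simp only [map_add, Algebra.TensorProduct.lift_tmul] at hz
  have := bq_indep h2 (I := I) (J := J) (Y0 := f2 y0) (Y1 := f2 y1)
      (Y2 := f2 y2) (Y3 := f2 y3) (nz ha hI) (nz hb hJ) hIJ (cI _) (cI _) (cI _) (cI _)
      (cJ _) (cJ _) (cJ _) (cJ _) (by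
        rw [← hz]
        simp [f1v])
  obtain ⟨e0, e1, e2, e3⟩ := this
  rw [inj2 _ e0, inj2 _ e1, inj2 _ e2, inj2 _ e3]
  simp

lemma bq_orth {K : Type*} [Field K] (b : (Fin 6 → K) →ₗ[K] (Fin 6 → K) →ₗ[K] K)
    (g : Fin 5 → (Fin 6 → K)) : ∃ v : Fin 6 → K, v ≠ 0 ∧ ∀ i, b (g i) v = 0 := by
  let φ : (Fin 6 → K) →ₗ[K] (Fin 5 → K) := LinearMap.pi fun i => b (g i)
  obtain ⟨v, hv, hv0⟩ := (Submodule.ne_bot_iff _).1 (LinearMap.ker_ne_bot_of_finrank_lt (f := φ) (by simp))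
  exact ⟨v, hv0, fun i => congrFun (LinearMap.mem_ker.1 hv) i⟩

/-- The core: a square root of `d` lies in a quaternion subalgebra, with quaternion centralizer. -/
lemma bq_core {K D : Type*} [Field K] [Ring D] [Algebra K D] [NoZeroDivisors D] [Nontrivial D]
    (h2 : (2 : K) ≠ 0) (d : K) (hd : d ≠ 0) (hnonsq : ¬∃ x : K, x ^ 2 = d)
    (ι ι' : (Fin 6 → K) →ₗ[K] D) (b : (Fin 6 → K) →ₗ[K] (Fin 6 → K) →ₗ[K] K)
    (hinj : ∀ v, ι v = 0 → v = 0) (hinj' : ∀ v, ι' v = 0 → v = 0)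
    (hb : ∀ v w, ι' v * ι w + ι' w * ι v = algebraMap K D (b v w))
    (hb' : ∀ v w, ι v * ι' w + ι w * ι' v = algebraMap K D (b v w))
    (a : D) (ha : a * a = algebraMap K D d)
    (G H : Fin 6 → K) (hG : G ≠ 0) (hH : ι H = ι G * a) :
    ∃ x y z : D, ∃ p q r : K, p ≠ 0 ∧ q ≠ 0 ∧ r ≠ 0 ∧ x * x = algebraMap K D p ∧
      y * y = algebraMap K D q ∧ z * z = algebraMap K D r ∧
      x * a = -(a * x) ∧ y * a = -(a * y) ∧ z * a = -(a * z) ∧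
      y * x = -(x * y) ∧ z * x = -(x * z) ∧ z * y = -(y * z) := by
  have inj := (algebraMap K D).injective
  let q : (Fin 6 → K) → K := fun v => b v v / 2
  have hq : ∀ v, ι' v * ι v = algebraMap K D (q v) := by
    intro v
    have h := hb v v
    have : algebraMap K D (b v v) = algebraMap K D 2 * algebraMap K D (q v) := by
      rw [← map_mul]; congr 1; simp only [q]; field_simp
    rw [this, ← two_mul, map_ofNat] at h
    have h2' : (2 : D) ≠ 0 := by
      have := (map_ne_zero_iff _ inj).2 h2
      rwa [map_ofNat] at this
    exact mul_left_cancel₀ h2' h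
  have hq' : ∀ v, ι v * ι' v = algebraMap K D (q v) := by
    intro v
    have h := hb' v v
    have : algebraMap K D (b v v) = algebraMap K D 2 * algebraMap K D (q v) := by
      rw [← map_mul]; congr 1; simp only [q]; field_simp
    rw [this, ← two_mul, map_ofNat] at h
    have h2' : (2 : D) ≠ 0 := by
      have := (map_ne_zero_iff _ inj).2 h2
      rwa [map_ofNat] at this
    exact mul_left_cancel₀ h2' h
  have qne : ∀ v, v ≠ 0 → q v ≠ 0 := by
    intro v hv h0
    have := hq v
    rw [h0, map_zero] at this
    rcases mul_eq_zero.1 this with h | h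
    · exact hv (hinj' v h)
    · exact hv (hinj v h)
  -- b G H = 0
  have e1 : ι' G * ι H = algebraMap K D (q G) * a := by rw [hH, ← mul_assoc, hq]
  have e2 : ι' H * ι G * algebraMap K D d = algebraMap K D (q H) * a := by
    rw [← ha, ← mul_assoc, mul_assoc _ (ι G) a, ← hH, hq]
  have e3 : algebraMap K D (d * q G + q H) * a = algebraMap K D (d * b G H) := by
    rw [map_add, map_mul, add_mul, ← e2, mul_assoc, ← e1, map_mul, ← hb, mul_add,
      Algebra.commutes d (ι' H * ι G)]
  have e4 : d * q G + q H = 0 := by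
    by_contra hne
    apply hnonsq
    refine ⟨(d * b G H) / (d * q G + q H), inj ?_⟩
    have : a = algebraMap K D ((d * b G H) / (d * q G + q H)) := by
      apply mul_left_cancel₀ ((map_ne_zero_iff _ inj).2 hne)
      rw [e3, ← map_mul]; congr 1; field_simp
    rw [pow_two, map_mul, ← this, ha]
  have bGH : b G H = 0 := by
    rw [e4, map_zero, zero_mul] at e3
    have := (map_eq_zero_iff _ inj).1 e3.symm
    exact (mul_eq_zero.1 this).resolve_left hd
  let X : (Fin 6 → K) → D := fun v => ι' G * ι v
  have hX : ∀ v w, b G v = 0 → X v * X w = - (algebraMap K D (q G) * (ι' v * ι w)) := by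
    intro v w h
    have := hb G v
    rw [h, map_zero] at this
    have h' : ι' G * ι v = -(ι' v * ι G) := eq_neg_of_add_eq_zero_left this
    simp only [X]
    rw [h', neg_mul, mul_assoc, ← mul_assoc (ι G), hq', ← mul_assoc, ← Algebra.commutes, mul_assoc]
  have hXX : ∀ v w, b G v = 0 → b G w = 0 → b v w = 0 → X w * X v = -(X v * X w) := by
    intro v w hv hw hvw
    rw [hX v w hv, hX w v hw, ← mul_neg]
    have := hb v w
    rw [hvw, map_zero] at this
    rw [eq_neg_of_add_eq_zero_left this]; simp
  have hXs : ∀ v, b G v = 0 → X v * X v = algebraMap K D (- (q G * q v)) := by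
    intro v hv
    rw [hX v v hv, hq, map_neg, map_mul]
  have hXa : ∀ v, b G v = 0 → b H v = 0 → X v * a = - (a * X v) := by
    intro v hv hv'
    have h := hXX H v bGH hv hv'
    have e : X H = algebraMap K D (q G) * a := e1
    rw [e, ← mul_assoc, ← Algebra.commutes, mul_assoc, mul_assoc (algebraMap K D (q G)) a, ← mul_neg] at h
    exact mul_left_cancel₀ ((map_ne_zero_iff _ inj).2 (qne G hG)) h
  obtain ⟨v3, n3, o3⟩ := bq_orth b ![G, H, H, H, H]
  obtain ⟨v4, n4, o4⟩ := bq_orth b ![G, H, v3, H, H]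
  obtain ⟨v5, n5, o5⟩ := bq_orth b ![G, H, v3, v4, H]
  have g3 : b G v3 = 0 := o3 0
  have k3 : b H v3 = 0 := o3 1
  have g4 : b G v4 = 0 := o4 0
  have k4 : b H v4 = 0 := o4 1
  have l4 : b v3 v4 = 0 := o4 2
  have g5 : b G v5 = 0 := o5 0
  have k5 : b H v5 = 0 := o5 1
  have l5 : b v3 v5 = 0 := o5 2
  have m5 : b v4 v5 = 0 := o5 3
  have nn : ∀ v, v ≠ 0 → -(q G * q v) ≠ 0 := fun v hv =>
    neg_ne_zero.2 (mul_ne_zero (qne G hG) (qne v hv))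
  exact ⟨X v3, X v4, X v5, _, _, _, nn _ n3, nn _ n4, nn _ n5, hXs _ g3, hXs _ g4, hXs _ g5,
    hXa _ g3 k3, hXa _ g4 k4, hXa _ g5 k5, hXX _ _ g3 g4 l4, hXX _ _ g3 g5 l5, hXX _ _ g4 g5 m5⟩

/-- four anticommuting elements give a biquaternion subalgebra -/
lemma bq_four {K D : Type*} [Field K] [Ring D] [Algebra K D] [NoZeroDivisors D] [Nontrivial D]
    (h2 : (2 : D) ≠ 0) (d : K) (hd : d ≠ 0) (a x y z : D) (p q r : K)
    (hp : p ≠ 0) (hq : q ≠ 0) (hr : r ≠ 0)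
    (ha : a * a = algebraMap K D d) (hx : x * x = algebraMap K D p)
    (hy : y * y = algebraMap K D q) (hz : z * z = algebraMap K D r)
    (xa : x * a = -(a * x)) (ya : y * a = -(a * y)) (za : z * a = -(a * z))
    (yx : y * x = -(x * y)) (zx : z * x = -(x * z)) (zy : z * y = -(y * z)) :
    ∃ a b c : K, a ≠ 0 ∧ b ≠ 0 ∧ c ≠ 0 ∧
      ∃ f : ℍ[K, a, b] ⊗[K] ℍ[K, c, d] →ₐ[K] D, Function.Injective f := by
  obtain ⟨t, ht⟩ : ∃ t, t = a * x := ⟨_, rfl⟩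
  have ta : t * a = -(a * t) := by rw [ht, mul_assoc, xa, mul_neg]
  have tx : t * x = -(x * t) := by rw [ht, ← mul_assoc x, xa]; simp
  have ty : t * y = y * t := by
    rw [ht, ← mul_assoc y, ya, mul_assoc, neg_mul, mul_assoc a y x, yx]; simp
  have tz : t * z = z * t := by
    rw [ht, ← mul_assoc z, za, mul_assoc, neg_mul, mul_assoc a z x, zx]; simp
  have tt : t * t = algebraMap K D (-(d * p)) := by
    nth_rewrite 2 [ht]
    rw [← mul_assoc, ta, neg_mul, mul_assoc, ht, mul_assoc a x x, hx, ← mul_assoc, ha, map_neg,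
      map_mul]
  have np : -(d * p) ≠ 0 := neg_ne_zero.2 (mul_ne_zero hd hp)
  refine ⟨-(d * p) * q, -(d * p) * r, p, mul_ne_zero np hq, mul_ne_zero np hr, hp,
    bq_embed h2 _ _ _ _ (mul_ne_zero np hq) (mul_ne_zero np hr) hp hd (t * y) (t * z) x a
      ?_ ?_ hx ha ?_ ?_ ?_ ?_ ?_ ?_⟩
  · rw [mul_assoc, ← mul_assoc y, ← ty, mul_assoc t y y, hy, ← mul_assoc, tt, map_mul]
  · rw [mul_assoc, ← mul_assoc z, ← tz, mul_assoc t z z, hz, ← mul_assoc, tt, map_mul]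
  · rw [mul_assoc, ← mul_assoc z, ← tz, mul_assoc t z y, zy, mul_assoc t y, ← mul_assoc y, ← ty]
    simp only [mul_neg, mul_assoc]
  · rw [xa]; simp [ht]
  · rw [mul_assoc, yx, mul_neg, ← mul_assoc, tx]; simp [mul_assoc]
  · rw [mul_assoc, ya, mul_neg, ← mul_assoc, ta]; simp [mul_assoc]
  · rw [mul_assoc, zx, mul_neg, ← mul_assoc, tx]; simp [mul_assoc]
  · rw [mul_assoc, za, mul_neg, ← mul_assoc, ta]; simp [mul_assoc]

/-- finding `g` skew with `g a` skew -/
lemma bq_skew {K D : Type*} [Field K] [Ring D] [Algebra K D] [NoZeroDivisors D] [Nontrivial D]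
    (d : K) (hd : d ≠ 0) (σ : D →ₗ[K] D) (hσ : ∀ x y, σ (x * y) = σ y * σ x)
    (hσσ : ∀ x, σ (σ x) = x)
    (a : D) (ha : a * a = algebraMap K D d)
    (i j : D) (hi : σ i = -i) (hj : σ j = -j) (hij : σ (i * j) = -(i * j)) (hi0 : i ≠ 0) (hj0 : j ≠ 0)
    (hcen : σ a = -a → (∀ v, σ v = -v → v * a = a * v) → False) :
    ∃ g : D, g ≠ 0 ∧ σ g = -g ∧ σ (g * a) = -(g * a) := by
  have hd' : algebraMap K D d ≠ 0 := (map_ne_zero_iff _ (algebraMap K D).injective).2 hd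
  have hsd : σ a * σ a = algebraMap K D d := by
    rw [← hσ, ha, Algebra.algebraMap_eq_smul_one, map_smul]
    have : σ 1 = 1 := by
      have := hσ (σ 1) 1
      simpa [hσσ] using this.symm
    rw [this]
  have com := fun x : D => Algebra.commutes d x
  by_cases h : ∃ v, σ v = -v ∧ σ a * v * a + algebraMap K D d * v ≠ 0
  · obtain ⟨v, hv, hne⟩ := h
    have sd : ∀ x, σ (algebraMap K D d * x) = algebraMap K D d * σ x := by
      intro x; rw [← Algebra.smul_def, map_smul, Algebra.smul_def]
    have hsg : σ (σ a * v * a + algebraMap K D d * v) = -(σ a * v * a + algebraMap K D d * v) := by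
      rw [map_add, sd, hσ, hσ, hσσ, hv]; simp only [mul_neg, neg_mul, mul_assoc]; abel
    refine ⟨_, hne, hsg, ?_⟩
    rw [hσ, hsg, mul_neg, mul_add, add_mul, mul_assoc (σ a * v), ha, ← com, ← mul_assoc, ← mul_assoc,
      ← mul_assoc, hsd, ← mul_assoc, ← com, mul_assoc _ (σ a) v, add_comm]
  · exfalso
    push Not at h
    have key : ∀ v, σ v = -v → σ a * v = -(v * a) := by
      intro v hv
      apply mul_left_cancel₀ hd'
      have := congrArg (· * a) (h v hv)
      simp only [add_mul, zero_mul] at this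
      rw [mul_assoc _ a a, ha, ← com, mul_assoc _ v a] at this
      rw [mul_neg]
      exact eq_neg_of_add_eq_zero_left this
    have k1 := key i hi
    have k2 := key j hj
    have k3 := key _ hij
    have hsa : σ a = -a := by
      have : i * (a * j) = i * (-(σ a) * j) := by
        rw [neg_mul, k2, neg_neg, ← mul_assoc, ← mul_assoc]
        rw [← mul_assoc, k1, neg_mul] at k3
        exact neg_injective k3
      have := mul_right_cancel₀ hj0 (mul_left_cancel₀ hi0 this)
      rw [eq_neg_iff_add_eq_zero, add_comm]; exact eq_neg_iff_add_eq_zero.1 this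
    refine hcen hsa fun v hv => ?_
    have := key v hv
    rw [hsa, neg_mul] at this
    exact (neg_injective this).symm

section concrete
variable {K : Type*} [Field K] (e₁ f₁ e₂ f₂ : K)

/-- the six-dimensional space of skew elements -/
noncomputable def bqIota (s : K) : (Fin 6 → K) →ₗ[K] ℍ[K, e₁, f₁] ⊗[K] ℍ[K, e₂, f₂] where
  toFun v := (⟨0, v 0, v 1, v 2⟩ : ℍ[K, e₁, f₁]) ⊗ₜ 1 + s • (1 ⊗ₜ (⟨0, v 3, v 4, v 5⟩ : ℍ[K, e₂, f₂]))
  map_add' v w := by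
    have h1 : (⟨0, v 0 + w 0, v 1 + w 1, v 2 + w 2⟩ : ℍ[K, e₁, f₁]) =
      ⟨0, v 0, v 1, v 2⟩ + ⟨0, w 0, w 1, w 2⟩ := by ext <;> simp
    have h2 : (⟨0, v 3 + w 3, v 4 + w 4, v 5 + w 5⟩ : ℍ[K, e₂, f₂]) =
      ⟨0, v 3, v 4, v 5⟩ + ⟨0, w 3, w 4, w 5⟩ := by ext <;> simp
    simp only [Pi.add_apply, h1, h2, TensorProduct.add_tmul, TensorProduct.tmul_add, smul_add]
    abel
  map_smul' r v := by
    have h1 : (⟨0, r * v 0, r * v 1, r * v 2⟩ : ℍ[K, e₁, f₁]) =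
      r • ⟨0, v 0, v 1, v 2⟩ := by ext <;> simp
    have h2 : (⟨0, r * v 3, r * v 4, r * v 5⟩ : ℍ[K, e₂, f₂]) =
      r • ⟨0, v 3, v 4, v 5⟩ := by ext <;> simp
    simp only [Pi.smul_apply, smul_eq_mul, h1, h2, TensorProduct.smul_tmul', TensorProduct.tmul_smul,
      smul_add, RingHom.id_apply, smul_comm s r]

lemma bqIota_apply (s : K) (v : Fin 6 → K) : bqIota e₁ f₁ e₂ f₂ s v =
  (⟨0, v 0, v 1, v 2⟩ : ℍ[K, e₁, f₁]) ⊗ₜ 1 + s • (1 ⊗ₜ (⟨0, v 3, v 4, v 5⟩ : ℍ[K, e₂, f₂])) := rfl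

/-- The (polar form of the) Albert form. -/
noncomputable def bqForm : (Fin 6 → K) →ₗ[K] (Fin 6 → K) →ₗ[K] K :=
  LinearMap.mk₂ K (fun v w => 2 * (e₁ * v 0 * w 0 + f₁ * v 1 * w 1 - e₁ * f₁ * v 2 * w 2
      - (e₂ * v 3 * w 3 + f₂ * v 4 * w 4 - e₂ * f₂ * v 5 * w 5)))
    (by intros; simp only [Pi.add_apply]; ring)
    (by intros; simp only [Pi.smul_apply, smul_eq_mul]; ring)
    (by intros; simp only [Pi.add_apply]; ring)
    (by intros; simp only [Pi.smul_apply, smul_eq_mul]; ring)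

lemma bqForm_spec (s : K) (hs : s * s = 1) (v w : Fin 6 → K) :
    bqIota e₁ f₁ e₂ f₂ (-s) v * bqIota e₁ f₁ e₂ f₂ s w + bqIota e₁ f₁ e₂ f₂ (-s) w * bqIota e₁ f₁ e₂ f₂ s v
      = algebraMap K _ (bqForm e₁ f₁ e₂ f₂ v w) := by
  have h1 : (⟨0, v 0, v 1, v 2⟩ : ℍ[K, e₁, f₁]) * ⟨0, w 0, w 1, w 2⟩ + ⟨0, w 0, w 1, w 2⟩ * ⟨0, v 0, v 1, v 2⟩
    = (2 * (e₁ * v 0 * w 0 + f₁ * v 1 * w 1 - e₁ * f₁ * v 2 * w 2)) • (1 : ℍ[K, e₁, f₁]) := by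
    ext <;> simp <;> ring
  have h2 : (⟨0, v 3, v 4, v 5⟩ : ℍ[K, e₂, f₂]) * ⟨0, w 3, w 4, w 5⟩ + ⟨0, w 3, w 4, w 5⟩ * ⟨0, v 3, v 4, v 5⟩
    = (2 * (e₂ * v 3 * w 3 + f₂ * v 4 * w 4 - e₂ * f₂ * v 5 * w 5)) • (1 : ℍ[K, e₂, f₂]) := by
    ext <;> simp <;> ring
  simp only [bqIota_apply, bqForm, LinearMap.mk₂_apply]
  generalize (⟨0, v 0, v 1, v 2⟩ : ℍ[K, e₁, f₁]) = x at *
  generalize (⟨0, w 0, w 1, w 2⟩ : ℍ[K, e₁, f₁]) = y at *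
  generalize (⟨0, v 3, v 4, v 5⟩ : ℍ[K, e₂, f₂]) = z at *
  generalize (⟨0, w 3, w 4, w 5⟩ : ℍ[K, e₂, f₂]) = u at *
  have h1' : (x * y) ⊗ₜ[K] (1 : ℍ[K, e₂, f₂]) = 
     (2 * (e₁ * v 0 * w 0 + f₁ * v 1 * w 1 - e₁ * f₁ * v 2 * w 2)) • (1 ⊗ₜ 1) - (y * x) ⊗ₜ 1 := by
    rw [eq_sub_iff_add_eq, ← TensorProduct.add_tmul, h1, TensorProduct.smul_tmul']
  have h2' : (1 : ℍ[K, e₁, f₁]) ⊗ₜ[K] (z * u) = 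
     (2 * (e₂ * v 3 * w 3 + f₂ * v 4 * w 4 - e₂ * f₂ * v 5 * w 5)) • (1 ⊗ₜ 1) - 1 ⊗ₜ (u * z) := by
    rw [eq_sub_iff_add_eq, ← TensorProduct.tmul_add, h2, TensorProduct.tmul_smul]
  rw [Algebra.algebraMap_eq_smul_one, Algebra.TensorProduct.one_def]
  simp only [add_mul, mul_add, smul_mul_assoc, mul_smul_comm, Algebra.TensorProduct.tmul_mul_tmul, one_mul,
    mul_one, h1', h2']
  match_scalars <;> first
    | ring1
    | linear_combination (-(2 * (e₂ * v 3 * w 3 + f₂ * v 4 * w 4 - e₂ * f₂ * v 5 * w 5))) * hs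

/-- product functionals on the tensor product -/
noncomputable def bqFn {A B : Type*} [AddCommGroup A] [Module K A] [AddCommGroup B] [Module K B]
    (φ : A →ₗ[K] K) (ψ : B →ₗ[K] K) : A ⊗[K] B →ₗ[K] K :=
  LinearMap.mul' K K ∘ₗ TensorProduct.map φ ψ

@[simp] lemma bqFn_tmul {A B : Type*} [AddCommGroup A] [Module K A] [AddCommGroup B] [Module K B]
    (φ : A →ₗ[K] K) (ψ : B →ₗ[K] K) (x : A) (y : B) : bqFn φ ψ (x ⊗ₜ y) = φ x * ψ y := by
  simp [bqFn]

/-- coordinate functionals -/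
noncomputable def bqC (a b : K) (n : Fin 4) : ℍ[K, a, b] →ₗ[K] K := (QuaternionAlgebra.basisOneIJK a 0 b).coord n

@[simp] lemma bqC0 (a b : K) (q : ℍ[K, a, b]) : bqC a b 0 q = q.re := by simp [bqC]
@[simp] lemma bqC1 (a b : K) (q : ℍ[K, a, b]) : bqC a b 1 q = q.imI := by simp [bqC]
@[simp] lemma bqC2 (a b : K) (q : ℍ[K, a, b]) : bqC a b 2 q = q.imJ := by simp [bqC]
@[simp] lemma bqC3 (a b : K) (q : ℍ[K, a, b]) : bqC a b 3 q = q.imK := by simp [bqC]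

lemma bqIota_inj (s : K) (hs : s ≠ 0) (v : Fin 6 → K) (h : bqIota e₁ f₁ e₂ f₂ s v = 0) : v = 0 := by
  rw [bqIota_apply] at h
  have h0 := congrArg (bqFn (bqC e₁ f₁ 1) (bqC e₂ f₂ 0)) h
  have h1 := congrArg (bqFn (bqC e₁ f₁ 2) (bqC e₂ f₂ 0)) h
  have h2 := congrArg (bqFn (bqC e₁ f₁ 3) (bqC e₂ f₂ 0)) h
  have h3 := congrArg (bqFn (bqC e₁ f₁ 0) (bqC e₂ f₂ 1)) h
  have h4 := congrArg (bqFn (bqC e₁ f₁ 0) (bqC e₂ f₂ 2)) h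
  have h5 := congrArg (bqFn (bqC e₁ f₁ 0) (bqC e₂ f₂ 3)) h
  simp [hs] at h0 h1 h2 h3 h4 h5
  funext n
  fin_cases n <;> simpa

/-- conjugation, as a linear map -/
noncomputable def bqStar (a b : K) : ℍ[K, a, b] →ₗ[K] ℍ[K, a, b] where
  toFun := star
  map_add' := star_add
  map_smul' r x := QuaternionAlgebra.star_smul' r x

@[simp] lemma bqStar_apply (a b : K) (q : ℍ[K, a, b]) : bqStar a b q = star q := rfl

/-- The tensor product of the canonical involutions. -/
noncomputable def bqSigma : ℍ[K, e₁, f₁] ⊗[K] ℍ[K, e₂, f₂] →ₗ[K] ℍ[K, e₁, f₁] ⊗[K] ℍ[K, e₂, f₂] :=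
  TensorProduct.map (bqStar e₁ f₁) (bqStar e₂ f₂)

@[simp] lemma bqSigma_tmul (x : ℍ[K, e₁, f₁]) (y : ℍ[K, e₂, f₂]) :
    bqSigma e₁ f₁ e₂ f₂ (x ⊗ₜ y) = star x ⊗ₜ star y := rfl

lemma bqSigma_mul (x y : ℍ[K, e₁, f₁] ⊗[K] ℍ[K, e₂, f₂]) : bqSigma e₁ f₁ e₂ f₂ (x * y) =
    bqSigma e₁ f₁ e₂ f₂ y * bqSigma e₁ f₁ e₂ f₂ x := by
  induction x using TensorProduct.induction_on with
  | zero => simp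
  | add x x' hx hx' => rw [add_mul, map_add, hx, hx', map_add, mul_add]
  | tmul p q =>
    induction y using TensorProduct.induction_on with
    | zero => simp
    | add x x' hx hx' => rw [mul_add, map_add, hx, hx', map_add, add_mul]
    | tmul r s => simp

lemma bqSigma_invol (x : ℍ[K, e₁, f₁] ⊗[K] ℍ[K, e₂, f₂]) :
    bqSigma e₁ f₁ e₂ f₂ (bqSigma e₁ f₁ e₂ f₂ x) = x := by
  induction x using TensorProduct.induction_on with
  | zero => simp
  | add x x' hx hx' => rw [map_add, map_add, hx, hx']
  | tmul p q => simp

lemma bqSigma_sub (x : ℍ[K, e₁, f₁] ⊗[K] ℍ[K, e₂, f₂]) :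
    ∃ v, x - bqSigma e₁ f₁ e₂ f₂ x = bqIota e₁ f₁ e₂ f₂ 1 v := by
  induction x using TensorProduct.induction_on with
  | zero => exact ⟨0, by simp⟩
  | add x x' hx hx' =>
    obtain ⟨v, hv⟩ := hx
    obtain ⟨w, hw⟩ := hx'
    refine ⟨v + w, ?_⟩
    rw [map_add, map_add, ← hv, ← hw]; abel
  | tmul p q =>
    refine ⟨![2 * q.re * p.imI, 2 * q.re * p.imJ, 2 * q.re * p.imK, 2 * p.re * q.imI,
      2 * p.re * q.imJ, 2 * p.re * q.imK], ?_⟩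
    rw [bqIota_apply, bqSigma_tmul]
    have h1 : (⟨0, 2 * q.re * p.imI, 2 * q.re * p.imJ, 2 * q.re * p.imK⟩ : ℍ[K, e₁, f₁]) =
      (2 * q.re) • ⟨0, p.imI, p.imJ, p.imK⟩ := by ext <;> simp
    have h2 : (⟨0, 2 * p.re * q.imI, 2 * p.re * q.imJ, 2 * p.re * q.imK⟩ : ℍ[K, e₂, f₂]) =
      (2 * p.re) • ⟨0, q.imI, q.imJ, q.imK⟩ := by ext <;> simp
    have p1 : p = p.re • 1 + ⟨0, p.imI, p.imJ, p.imK⟩ := by ext <;> simp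
    have p2 : star p = p.re • 1 - ⟨0, p.imI, p.imJ, p.imK⟩ := by ext <;> simp
    have q1 : q = q.re • 1 + ⟨0, q.imI, q.imJ, q.imK⟩ := by ext <;> simp
    have q2 : star q = q.re • 1 - ⟨0, q.imI, q.imJ, q.imK⟩ := by ext <;> simp
    simp only [Matrix.cons_val, h1, h2]
    rw [p2, q2]
    conv_lhs => rw [p1, q1]
    simp only [QuaternionAlgebra.re_add, QuaternionAlgebra.re_smul, QuaternionAlgebra.re_one, smul_eq_mul,
      mul_one, add_zero, QuaternionAlgebra.imI_add, QuaternionAlgebra.imJ_add, QuaternionAlgebra.imK_add,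
      QuaternionAlgebra.imI_smul, QuaternionAlgebra.imJ_smul, QuaternionAlgebra.imK_smul,
      QuaternionAlgebra.imI_one, QuaternionAlgebra.imJ_one, QuaternionAlgebra.imK_one, mul_zero, zero_add]
    simp only [TensorProduct.add_tmul, TensorProduct.tmul_add, TensorProduct.sub_tmul, TensorProduct.tmul_sub,
      TensorProduct.smul_tmul', TensorProduct.tmul_smul, ← TensorProduct.smul_tmul']
    module

lemma bqSigma_skew (h2 : (2 : K) ≠ 0) (x : ℍ[K, e₁, f₁] ⊗[K] ℍ[K, e₂, f₂])
    (hx : bqSigma e₁ f₁ e₂ f₂ x = -x) : ∃ v, x = bqIota e₁ f₁ e₂ f₂ 1 v := by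
  obtain ⟨v, hv⟩ := bqSigma_sub e₁ f₁ e₂ f₂ x
  refine ⟨(2 : K)⁻¹ • v, ?_⟩
  rw [map_smul, ← hv, hx, sub_neg_eq_add, ← two_smul K x, smul_smul, inv_mul_cancel₀ h2, one_smul]

lemma bq_cen (h2 : (2 : K) ≠ 0) (he₁ : e₁ ≠ 0) (hf₁ : f₁ ≠ 0) (he₂ : e₂ ≠ 0) (hf₂ : f₂ ≠ 0)
    (a : ℍ[K, e₁, f₁] ⊗[K] ℍ[K, e₂, f₂]) (ha : bqSigma e₁ f₁ e₂ f₂ a = -a)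
    (hc : ∀ v, bqSigma e₁ f₁ e₂ f₂ v = -v → v * a = a * v) : a = 0 := by
  obtain ⟨v, rfl⟩ := bqSigma_skew e₁ f₁ e₂ f₂ h2 a ha
  have s1 : star (⟨0,1,0,0⟩ : ℍ[K, e₁, f₁]) = - ⟨0,1,0,0⟩ := by ext <;> simp
  have s2 : star (⟨0,0,1,0⟩ : ℍ[K, e₁, f₁]) = - ⟨0,0,1,0⟩ := by ext <;> simp
  have s3 : star (⟨0,1,0,0⟩ : ℍ[K, e₂, f₂]) = - ⟨0,1,0,0⟩ := by ext <;> simp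
  have s4 : star (⟨0,0,1,0⟩ : ℍ[K, e₂, f₂]) = - ⟨0,0,1,0⟩ := by ext <;> simp
  have c1 := hc ((⟨0,1,0,0⟩ : ℍ[K, e₁, f₁]) ⊗ₜ 1) (by rw [bqSigma_tmul, s1, star_one, TensorProduct.neg_tmul])
  have c2 := hc ((⟨0,0,1,0⟩ : ℍ[K, e₁, f₁]) ⊗ₜ 1) (by rw [bqSigma_tmul, s2, star_one, TensorProduct.neg_tmul])
  have c3 := hc (1 ⊗ₜ (⟨0,1,0,0⟩ : ℍ[K, e₂, f₂])) (by rw [bqSigma_tmul, s3, star_one, TensorProduct.tmul_neg])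
  have c4 := hc (1 ⊗ₜ (⟨0,0,1,0⟩ : ℍ[K, e₂, f₂])) (by rw [bqSigma_tmul, s4, star_one, TensorProduct.tmul_neg])
  have neg : ∀ x : K, x = -x → x = 0 := by
    intro x hx
    have : 2 * x = 0 := by linear_combination hx
    exact (mul_eq_zero.1 this).resolve_left h2
  have neg' : ∀ x : K, -x = x → x = 0 := fun x hx => neg x hx.symm
  have h2' : v 2 = 0 := by
    have := congrArg (bqFn (bqC e₁ f₁ 2) (bqC e₂ f₂ 0)) c1
    simp [bqIota_apply, add_mul, mul_add] at this
    simpa [he₁] using neg _ this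
  have h1' : v 1 = 0 := by
    have := congrArg (bqFn (bqC e₁ f₁ 3) (bqC e₂ f₂ 0)) c1
    simp [bqIota_apply, add_mul, mul_add] at this
    exact neg _ this
  have h0' : v 0 = 0 := by
    have := congrArg (bqFn (bqC e₁ f₁ 3) (bqC e₂ f₂ 0)) c2
    simp [bqIota_apply, add_mul, mul_add] at this
    exact neg' _ this
  have h5' : v 5 = 0 := by
    have := congrArg (bqFn (bqC e₁ f₁ 0) (bqC e₂ f₂ 2)) c3
    simp [bqIota_apply, add_mul, mul_add] at this
    simpa [he₂] using neg _ this
  have h4' : v 4 = 0 := by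
    have := congrArg (bqFn (bqC e₁ f₁ 0) (bqC e₂ f₂ 3)) c3
    simp [bqIota_apply, add_mul, mul_add] at this
    exact neg _ this
  have h3' : v 3 = 0 := by
    have := congrArg (bqFn (bqC e₁ f₁ 0) (bqC e₂ f₂ 3)) c4
    simp [bqIota_apply, add_mul, mul_add] at this
    exact neg' _ this
  have : v = 0 := by
    funext n
    fin_cases n <;> simpa
  rw [this, map_zero]
end concrete

section stepone

/-- matrices over a domain of dimension 16 are not matrices over a quaternion algebra -/
lemma bq_notdiv {L : Type*} [Field L] {E H : Type*} [Ring E] [Algebra L E] [Ring H] [Algebra L H]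
    [NoZeroDivisors E] [Module.Finite L E] [Module.Finite L H]
    (hE : Module.finrank L E = 16) (hH : Module.finrank L H = 4) (n m : ℕ) (hn : 0 < n)
    (hm : 0 < m)
    (φ : Matrix (Fin n) (Fin n) E ≃ₐ[L] Matrix (Fin m) (Fin m) H) : False := by
  have hdim : n * n * 16 = m * m * 4 := by
    have := φ.toLinearEquiv.finrank_eq
    rw [Module.finrank_matrix, Module.finrank_matrix] at this
    simpa [hE, hH] using this
  have hmn : m = 2 * n := by
    have : m * m = (2 * n) * (2 * n) := by linarith
    exact Nat.mul_self_inj.1 this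
  haveI : Nontrivial H := Module.nontrivial_of_finrank_pos (R := L) (by omega)
  let z : Fin m := ⟨0, hm⟩
  let Z : Matrix (Fin m) (Fin m) H := Matrix.single z z 1
  let A := φ.symm Z
  have hA : A ≠ 0 := by
    intro h
    have : Z = 0 := by
      have := congrArg φ h
      simpa [A] using this
    have := congrFun (congrFun this z) z
    simp [Z] at this
  obtain ⟨i, j, hij⟩ : ∃ i j, A i j ≠ 0 := by
    by_contra! h
    exact hA (Matrix.ext h)
  let M : (Fin n → E) →ₗ[L] Matrix (Fin n) (Fin n) E :=
    { toFun := fun v => Matrix.of fun k l => if l = i then v k else 0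
      map_add' := by
        intro v w; ext k l; by_cases h : l = i <;> simp [h]
      map_smul' := by
        intro r w; ext k l; by_cases h : l = i <;> simp [h] }
  let C : Matrix (Fin m) (Fin m) H →ₗ[L] (Fin m → H) :=
    { toFun := fun N k => N k z
      map_add' := fun _ _ => rfl
      map_smul' := fun _ _ => rfl }
  let F : (Fin n → E) →ₗ[L] (Fin m → H) := C ∘ₗ φ.toLinearMap ∘ₗ M
  have hF : Function.Injective F := by
    rw [injective_iff_map_eq_zero]
    intro v hv
    have h1 : φ (M v) * Z = 0 := by
      ext k l
      have := congrFun hv k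
      change φ (M v) k z = 0 at this
      by_cases hl : l = z
      · subst hl; simp [Z, this]
      · simp [Z, Matrix.mul_apply, Matrix.single_apply, Ne.symm hl]
    have h2 : M v * A = 0 := by
      apply φ.injective
      simpa [A] using h1
    funext k
    have h3 := congrFun (congrFun h2 k) j
    simp [M, Matrix.mul_apply] at h3
    exact h3.resolve_right hij
  have := LinearMap.finrank_le_finrank_of_injective hF
  rw [Module.finrank_pi_fintype, Module.finrank_pi_fintype] at this
  simp [hE, hH] at this
  omega

lemma bq_quad_nzd {K L D : Type*} [Field K] [Field L] [Algebra K L] [Ring D] [Algebra K D]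
    (d : K) (hnonsq : ¬∃ x : K, x ^ 2 = d)
    (hquad : Module.finrank K L = 2) (δ : L) (hδ : δ ^ 2 = algebraMap K L d)
    (hdiv : ∀ z : D, z ≠ 0 → IsUnit z) (hno : ¬ ∃ a : D, a * a = algebraMap K D d) :
    NoZeroDivisors (L ⊗[K] D) := by
  have hspan : ∀ l : L, ∃ x y : K, l = x • 1 + y • δ := by
    have hli : LinearIndependent K ![(1 : L), δ] := by
      rw [LinearIndependent.pair_iff]
      intro s t hst
      have ht : t = 0 := by
        by_contra ht
        apply hnonsq
        refine ⟨-s / t, (algebraMap K L).injective ?_⟩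
        have : δ = algebraMap K L (-s / t) := by
          rw [Algebra.smul_def, Algebra.smul_def] at hst
          have ht' : algebraMap K L t ≠ 0 := (map_ne_zero_iff _ (algebraMap K L).injective).2 ht
          rw [map_div₀, map_neg]
          field_simp
          linear_combination hst
        rw [map_pow, ← this, hδ]
      refine ⟨?_, ht⟩
      simpa [ht] using hst
    have hs := hli.span_eq_top_of_card_eq_finrank (by simp [hquad])
    intro l
    have : l ∈ Submodule.span K (Set.range ![(1 : L), δ]) := by rw [hs]; trivial
    rw [Matrix.range_cons, Matrix.range_cons, Matrix.range_empty, Set.union_empty,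
      Set.singleton_union, Submodule.mem_span_pair] at this
    obtain ⟨x, y, h⟩ := this
    exact ⟨x, y, h.symm⟩
  have hdec : ∀ z : L ⊗[K] D, ∃ x y : D, z = (1 : L) ⊗ₜ x + δ ⊗ₜ y := by
    intro z
    induction z using TensorProduct.induction_on with
    | zero => exact ⟨0, 0, by simp⟩
    | add x x' hx hx' =>
      obtain ⟨p, q, h⟩ := hx
      obtain ⟨p', q', h'⟩ := hx'
      refine ⟨p + p', q + q', ?_⟩
      rw [h, h', TensorProduct.tmul_add, TensorProduct.tmul_add]; abel
    | tmul l w =>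
      obtain ⟨x, y, h⟩ := hspan l
      refine ⟨x • w, y • w, ?_⟩
      rw [h, TensorProduct.add_tmul, TensorProduct.smul_tmul, TensorProduct.smul_tmul]
  have hu : ∀ x : D, x ≠ 0 → IsUnit ((1 : L) ⊗ₜ[K] x) := fun x hx =>
    (hdiv x hx).map (Algebra.TensorProduct.includeRight : D →ₐ[K] L ⊗[K] D)
  have hunit : ∀ z : L ⊗[K] D, z ≠ 0 → ∃ w, IsUnit (w * z) := by
    intro z hz
    obtain ⟨x, y, rfl⟩ := hdec z
    by_cases hy : y = 0
    · subst hy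
      refine ⟨1, ?_⟩
      rw [TensorProduct.tmul_zero, add_zero] at hz
      rw [TensorProduct.tmul_zero, add_zero, one_mul]
      refine hu x ?_
      rintro rfl
      simp at hz
    · obtain ⟨u, rfl⟩ := hdiv y hy
      set c : D := ↑u⁻¹ * x with hc
      have hx : x = ↑u * c := by simp [hc]
      refine ⟨((1 : L) ⊗ₜ c - δ ⊗ₜ 1) * ((1 : L) ⊗ₜ (↑u⁻¹ : D)), ?_⟩
      have : ((1 : L) ⊗ₜ[K] c - δ ⊗ₜ[K] (1 : D)) * ((1 : L) ⊗ₜ[K] (↑u⁻¹ : D)) * ((1 : L) ⊗ₜ[K] x + δ ⊗ₜ[K] (u : D))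
          = (1 : L) ⊗ₜ[K] (c * c - algebraMap K D d) := by
        rw [mul_assoc, mul_add]
        simp only [Algebra.TensorProduct.tmul_mul_tmul, ← hc, Units.inv_mul, one_mul, sub_mul, mul_add,
          mul_one, TensorProduct.tmul_sub]
        rw [← pow_two δ, hδ, Algebra.algebraMap_eq_smul_one, Algebra.algebraMap_eq_smul_one,
          TensorProduct.smul_tmul]
        abel
      rw [this]
      refine hu _ fun h => hno ⟨c, sub_eq_zero.1 h⟩
  refine ⟨?_⟩
  intro x y hxy
  by_cases hx : x = 0
  · exact Or.inl hx
  · right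
    obtain ⟨w, hw⟩ := hunit x hx
    rw [← hw.mul_right_eq_zero, mul_assoc, hxy, mul_zero]
end stepone

/-- Let `K` be a field of characteristic `≠ 2`, `d ∈ K^×` a non-square and
`L = K(√d)`.  Let `Q₁ = (e₁,f₁)_K` and `Q₂ = (e₂,f₂)_K` be quaternion algebras over `K`
such that the biquaternion algebra `Q₁ ⊗_K Q₂` is a division algebra, and suppose that
`(Q₁ ⊗_K Q₂) ⊗_K L` is Brauer-equivalent to a quaternion algebra over `L`.  Then there are
`a, b, c ∈ K^×` with `Q₁ ⊗_K Q₂` Brauer-equivalent to `(a,b)_K ⊗_K (c,d)_K`. -/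
theorem biquaternion_decomposition
    (K L : Type) [Field K] [Field L] [Algebra K L]
    (hchar : ringChar K ≠ 2)
    (d : K) (hd : d ≠ 0) (hnonsq : ¬∃ x : K, x ^ 2 = d)
    (hquad : Module.finrank K L = 2)
    (hsqrt : ∃ δ : L, δ ^ 2 = algebraMap K L d)
    (e₁ f₁ e₂ f₂ : K) (he₁ : e₁ ≠ 0) (hf₁ : f₁ ≠ 0) (he₂ : e₂ ≠ 0) (hf₂ : f₂ ≠ 0)
    (hdiv : ∀ z : ℍ[K, e₁, f₁] ⊗[K] ℍ[K, e₂, f₂], z ≠ 0 → IsUnit z)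
    (hquat : ∃ x y : L, x ≠ 0 ∧ y ≠ 0 ∧
      BrauerEquivalent L (L ⊗[K] (ℍ[K, e₁, f₁] ⊗[K] ℍ[K, e₂, f₂])) ℍ[L, x, y]) :
    ∃ a b c : K, a ≠ 0 ∧ b ≠ 0 ∧ c ≠ 0 ∧
      BrauerEquivalent K (ℍ[K, e₁, f₁] ⊗[K] ℍ[K, e₂, f₂]) (ℍ[K, a, b] ⊗[K] ℍ[K, c, d]) := by
  obtain ⟨δ, hδ⟩ := hsqrt
  have h2 : (2 : K) ≠ 0 := Ring.two_ne_zero hchar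
  have hfr : ∀ a b c e : K, Module.finrank K (ℍ[K, a, b] ⊗[K] ℍ[K, c, e]) = 16 := by
    intro a b c e
    rw [Module.finrank_tensorProduct, QuaternionAlgebra.finrank_eq_four,
      QuaternionAlgebra.finrank_eq_four]
  haveI : Nontrivial (ℍ[K, e₁, f₁] ⊗[K] ℍ[K, e₂, f₂]) :=
    Module.nontrivial_of_finrank_pos (R := K) (by rw [hfr]; norm_num)
  haveI : NoZeroDivisors (ℍ[K, e₁, f₁] ⊗[K] ℍ[K, e₂, f₂]) := by
    refine ⟨?_⟩
    intro x y hxy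
    by_cases hx : x = 0
    · exact Or.inl hx
    · exact Or.inr (((hdiv x hx).mul_right_eq_zero).1 hxy)
  have inj := (algebraMap K (ℍ[K, e₁, f₁] ⊗[K] ℍ[K, e₂, f₂])).injective
  have h2D : (2 : ℍ[K, e₁, f₁] ⊗[K] ℍ[K, e₂, f₂]) ≠ 0 := by
    have := (map_ne_zero_iff _ inj).2 h2
    rwa [map_ofNat] at this
  obtain ⟨a, ha⟩ : ∃ a : ℍ[K, e₁, f₁] ⊗[K] ℍ[K, e₂, f₂], a * a = algebraMap K _ d := by
    by_contra hno
    haveI := bq_quad_nzd d hnonsq hquad δ hδ hdiv hno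
    obtain ⟨x, y, -, -, n, m, hn, hm, ⟨φ⟩⟩ := hquat
    refine bq_notdiv (L := L) ?_ ?_ n m hn hm φ
    · rw [Module.finrank_baseChange, hfr]
    · exact QuaternionAlgebra.finrank_eq_four _ _ _
  obtain ⟨g, hg0, hg, hga⟩ := bq_skew d hd (bqSigma e₁ f₁ e₂ f₂) (bqSigma_mul _ _ _ _)
    (bqSigma_invol _ _ _ _) a ha ((⟨0,1,0,0⟩ : ℍ[K, e₁, f₁]) ⊗ₜ 1) ((⟨0,0,1,0⟩ : ℍ[K, e₁, f₁]) ⊗ₜ 1)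
    (by
      rw [bqSigma_tmul, ← TensorProduct.neg_tmul, star_one]; congr 1; ext <;> simp)
    (by
      rw [bqSigma_tmul, ← TensorProduct.neg_tmul, star_one]; congr 1; ext <;> simp)
    (by
      rw [Algebra.TensorProduct.tmul_mul_tmul, bqSigma_tmul, ← TensorProduct.neg_tmul, mul_one, star_one]
      congr 1; ext <;> simp)
    (by
      intro h
      have := congrArg (bqFn (bqC e₁ f₁ 1) (bqC e₂ f₂ 0)) h
      simp at this)
    (by
      intro h
      have := congrArg (bqFn (bqC e₁ f₁ 2) (bqC e₂ f₂ 0)) h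
      simp at this)
    (by
      intro hs hc
      have := bq_cen e₁ f₁ e₂ f₂ h2 he₁ hf₁ he₂ hf₂ a hs hc
      rw [this, mul_zero] at ha
      exact hd ((map_eq_zero_iff _ inj).1 ha.symm))
  obtain ⟨G, rfl⟩ := bqSigma_skew e₁ f₁ e₂ f₂ h2 _ hg
  obtain ⟨H, hH⟩ := bqSigma_skew e₁ f₁ e₂ f₂ h2 _ hga
  obtain ⟨x, y, z, p, q, r, hp, hq, hr, hx, hy, hz, xa, ya, za, yx, zx, zy⟩ :=
    bq_core h2 d hd hnonsq (bqIota e₁ f₁ e₂ f₂ 1) (bqIota e₁ f₁ e₂ f₂ (-1)) (bqForm e₁ f₁ e₂ f₂)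
    (bqIota_inj _ _ _ _ _ one_ne_zero) (bqIota_inj _ _ _ _ _ (neg_ne_zero.2 one_ne_zero))
    (bqForm_spec _ _ _ _ 1 (by ring))
    (by
      intro v w
      have := bqForm_spec e₁ f₁ e₂ f₂ (-1) (by ring) v w
      rwa [neg_neg] at this)
    a ha G H (by rintro rfl; simp at hg0) hH.symm
  obtain ⟨a', b', c', ha', hb', hc', f, hf⟩ :=
    bq_four h2D d hd a x y z p q r hp hq hr ha hx hy hz xa ya za yx zx zy
  refine ⟨a', b', c', ha', hb', hc', 1, 1, one_pos, one_pos, ⟨AlgEquiv.mapMatrix ?_⟩⟩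
  refine (AlgEquiv.ofBijective f ⟨hf, ?_⟩).symm
  exact (LinearMap.injective_iff_surjective_of_finrank_eq_finrank (f := f.toLinearMap)
    (by rw [hfr, hfr])).1 hf
end

section
/- Let k be a field of characteristic different from 2. Work inside the commutative ring R obtained from the polynomial ring k[r, s, t, u, v, u′, v′] by inverting r, s and t. Let M₁ be the k[r, r⁻¹, s, s⁻¹, t]-submodule of R generated by the nine elements t²u²u′², tu²u′v′, t²u²v′², tuvu′², uvu′v′, tuvv′², t²v²u′², tv²u′v′, t²v²v′². Let M₂ be the k[r, r⁻¹, s, t, t⁻¹]-submodule of R generated by the nine elements s²(u²+v²)(u′²+v′²), s(u²+v²)(u′²−v′²), s²(u²+v²)u′v′, s(u²−v²)(u′²+v′²), (u²−v²)(u′²−v′²), s(u²−v²)u′v′, s²uv(u′²+v′²), suv(u′²−v′²), s²uvu′v′. Let M₃ be the k[r, s, s⁻¹, t, t⁻¹]-submodule of R generated by the nine elements r²u²u′², r²(uv′+vu′)², (uv′−vu′)², r²v²v′², ruu′(uv′−vu′), rvv′(uv′−vu′), r(uv′+vu′)(uv′−vu′), r²uu′(uv′+vu′), r²vv′(uv′+vu′).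 Then the intersection M₁ ∩ M₂ ∩ M₃ (as subsets of R) equals the k[r, s, t]-submodule of R generated by the nine elements r²s²uvu′v′, r²t²(u²−v²)(u′²−v′²), s²t²(uv′−vu′)², rst(uu′+vv′)(uv′−vu′), r²st(uu′−vv′)(uv′+vu′), rs²t(uu′−vv′)(uv′−vu′), rst²(uv′+vu′)(uv′−vu′), r²s²t(uu′+vv′)(uv′+vu′), r²st²(uu′−vv′)(uu′+vv′); moreover, these nine elements form a basis, so that this module is free of rank 9 over k[r, s, t]. -/
/-!
**Statement 5.**  Inside the localization `R` of `k[r,s,t,u,v,u',v']` at `r·s·t`, the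
intersection of the `k[r,r⁻¹,s,s⁻¹,t]`-module `M₁`, the `k[r,r⁻¹,s,t,t⁻¹]`-module `M₂` and
the `k[r,s,s⁻¹,t,t⁻¹]`-module `M₃` spanned by the indicated nine-element families equals the
`k[r,s,t]`-module spanned by the indicated nine elements, and those nine elements are
linearly independent over `k[r,s,t]` (hence form a basis of the intersection).
-/

noncomputable section Stmt5

open MvPolynomial

/-- The polynomial ring `k[r,s,t,u,v,u',v']`. -/
abbrev Pol (k : Type) [Field k] : Type := MvPolynomial (Fin 7) k

/-- The localization of `k[r,s,t,u,v,u',v']` inverting `r`, `s` and `t`. -/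
abbrev Loc (k : Type) [Field k] : Type := Localization.Away (X 0 * X 1 * X 2 : Pol k)

variable (k : Type) [Field k]

/-- the image of `r` -/ def rr : Loc k := algebraMap (Pol k) (Loc k) (X 0)
/-- the image of `s` -/ def ss : Loc k := algebraMap (Pol k) (Loc k) (X 1)
/-- the image of `t` -/ def tt : Loc k := algebraMap (Pol k) (Loc k) (X 2)
/-- the image of `u` -/ def uu : Loc k := algebraMap (Pol k) (Loc k) (X 3)
/-- the image of `v` -/ def vv : Loc k := algebraMap (Pol k) (Loc k) (X 4)
/-- the image of `u'` -/ def uu' : Loc k := algebraMap (Pol k) (Loc k) (X 5)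
/-- the image of `v'` -/ def vv' : Loc k := algebraMap (Pol k) (Loc k) (X 6)

/-- `r⁻¹` in the localization -/
def rrInv : Loc k :=
  algebraMap (Pol k) (Loc k) (X 1 * X 2) *
    IsLocalization.Away.invSelf (S := Loc k) (X 0 * X 1 * X 2 : Pol k)

/-- `s⁻¹` in the localization -/
def ssInv : Loc k :=
  algebraMap (Pol k) (Loc k) (X 0 * X 2) *
    IsLocalization.Away.invSelf (S := Loc k) (X 0 * X 1 * X 2 : Pol k)

/-- `t⁻¹` in the localization -/
def ttInv : Loc k :=
  algebraMap (Pol k) (Loc k) (X 0 * X 1) *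
    IsLocalization.Away.invSelf (S := Loc k) (X 0 * X 1 * X 2 : Pol k)

/-- the coefficient ring `k[r,r⁻¹,s,s⁻¹,t]` -/
def A₁ : Subalgebra k (Loc k) := Algebra.adjoin k {rr k, rrInv k, ss k, ssInv k, tt k}
/-- the coefficient ring `k[r,r⁻¹,s,t,t⁻¹]` -/
def A₂ : Subalgebra k (Loc k) := Algebra.adjoin k {rr k, rrInv k, ss k, tt k, ttInv k}
/-- the coefficient ring `k[r,s,s⁻¹,t,t⁻¹]` -/
def A₃ : Subalgebra k (Loc k) := Algebra.adjoin k {rr k, ss k, ssInv k, tt k, ttInv k}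
/-- the coefficient ring `k[r,s,t]` -/
def A₀ : Subalgebra k (Loc k) := Algebra.adjoin k {rr k, ss k, tt k}

/-- the nine generators of `M₁` -/
def g₁ : Fin 9 → Loc k :=
  ![tt k ^ 2 * uu k ^ 2 * uu' k ^ 2,
    tt k * uu k ^ 2 * uu' k * vv' k,
    tt k ^ 2 * uu k ^ 2 * vv' k ^ 2,
    tt k * uu k * vv k * uu' k ^ 2,
    uu k * vv k * uu' k * vv' k,
    tt k * uu k * vv k * vv' k ^ 2,
    tt k ^ 2 * vv k ^ 2 * uu' k ^ 2,
    tt k * vv k ^ 2 * uu' k * vv' k,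
    tt k ^ 2 * vv k ^ 2 * vv' k ^ 2]

/-- the nine generators of `M₂` -/
def g₂ : Fin 9 → Loc k :=
  ![ss k ^ 2 * (uu k ^ 2 + vv k ^ 2) * (uu' k ^ 2 + vv' k ^ 2),
    ss k * (uu k ^ 2 + vv k ^ 2) * (uu' k ^ 2 - vv' k ^ 2),
    ss k ^ 2 * (uu k ^ 2 + vv k ^ 2) * (uu' k * vv' k),
    ss k * (uu k ^ 2 - vv k ^ 2) * (uu' k ^ 2 + vv' k ^ 2),
    (uu k ^ 2 - vv k ^ 2) * (uu' k ^ 2 - vv' k ^ 2),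
    ss k * (uu k ^ 2 - vv k ^ 2) * (uu' k * vv' k),
    ss k ^ 2 * (uu k * vv k) * (uu' k ^ 2 + vv' k ^ 2),
    ss k * (uu k * vv k) * (uu' k ^ 2 - vv' k ^ 2),
    ss k ^ 2 * (uu k * vv k) * (uu' k * vv' k)]

/-- the nine generators of `M₃` -/
def g₃ : Fin 9 → Loc k :=
  ![rr k ^ 2 * uu k ^ 2 * uu' k ^ 2,
    rr k ^ 2 * (uu k * vv' k + vv k * uu' k) ^ 2,
    (uu k * vv' k - vv k * uu' k) ^ 2,
    rr k ^ 2 * vv k ^ 2 * vv' k ^ 2,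
    rr k * uu k * uu' k * (uu k * vv' k - vv k * uu' k),
    rr k * vv k * vv' k * (uu k * vv' k - vv k * uu' k),
    rr k * (uu k * vv' k + vv k * uu' k) * (uu k * vv' k - vv k * uu' k),
    rr k ^ 2 * uu k * uu' k * (uu k * vv' k + vv k * uu' k),
    rr k ^ 2 * vv k * vv' k * (uu k * vv' k + vv k * uu' k)]

/-- the nine elements generating (and forming a basis of) the intersection -/
def g₀ : Fin 9 → Loc k :=
  ![rr k ^ 2 * ss k ^ 2 * (uu k * vv k * uu' k * vv' k),
    rr k ^ 2 * tt k ^ 2 * ((uu k ^ 2 - vv k ^ 2) * (uu' k ^ 2 - vv' k ^ 2)),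
    ss k ^ 2 * tt k ^ 2 * (uu k * vv' k - vv k * uu' k) ^ 2,
    rr k * ss k * tt k *
      ((uu k * uu' k + vv k * vv' k) * (uu k * vv' k - vv k * uu' k)),
    rr k ^ 2 * ss k * tt k *
      ((uu k * uu' k - vv k * vv' k) * (uu k * vv' k + vv k * uu' k)),
    rr k * ss k ^ 2 * tt k *
      ((uu k * uu' k - vv k * vv' k) * (uu k * vv' k - vv k * uu' k)),
    rr k * ss k * tt k ^ 2 *
      ((uu k * vv' k + vv k * uu' k) * (uu k * vv' k - vv k * uu' k)),
    rr k ^ 2 * ss k ^ 2 * tt k *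
      ((uu k * uu' k + vv k * vv' k) * (uu k * vv' k + vv k * uu' k)),
    rr k ^ 2 * ss k * tt k ^ 2 *
      ((uu k * uu' k - vv k * vv' k) * (uu k * uu' k + vv k * vv' k))]

/-- `M₁`, a module over `k[r,r⁻¹,s,s⁻¹,t]` -/
def M₁ : Submodule (A₁ k) (Loc k) := Submodule.span (A₁ k) (Set.range (g₁ k))
/-- `M₂`, a module over `k[r,r⁻¹,s,t,t⁻¹]` -/
def M₂ : Submodule (A₂ k) (Loc k) := Submodule.span (A₂ k) (Set.range (g₂ k))
/-- `M₃`, a module over `k[r,s,s⁻¹,t,t⁻¹]` -/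
def M₃ : Submodule (A₃ k) (Loc k) := Submodule.span (A₃ k) (Set.range (g₃ k))
/-- `M₀`, a module over `k[r,s,t]` -/
def M₀ : Submodule (A₀ k) (Loc k) := Submodule.span (A₀ k) (Set.range (g₀ k))


/-! ### Units and invertibility -/

lemma prod_mul_inv : algebraMap (Pol k) (Loc k) (X 0 * X 1 * X 2) *
    IsLocalization.Away.invSelf (S := Loc k) (X 0 * X 1 * X 2 : Pol k) = 1 :=
  IsLocalization.Away.mul_invSelf _

lemma rr_mul_inv : rr k * rrInv k = 1 := by
  have h := prod_mul_inv k
  simp only [map_mul] at h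
  simp only [rr, rrInv, map_mul]
  linear_combination h

lemma ss_mul_inv : ss k * ssInv k = 1 := by
  have h := prod_mul_inv k
  simp only [map_mul] at h
  simp only [ss, ssInv, map_mul]
  linear_combination h

lemma tt_mul_inv : tt k * ttInv k = 1 := by
  have h := prod_mul_inv k
  simp only [map_mul] at h
  simp only [tt, ttInv, map_mul]
  linear_combination h

lemma algebraMap_loc (c : k) : algebraMap k (Loc k) c = algebraMap (Pol k) (Loc k) (C c) := by
  rw [IsScalarTower.algebraMap_apply k (Pol k) (Loc k)]
  rfl

lemma four_inv (hchar : ringChar k ≠ 2) : (4 : Loc k) * algebraMap k (Loc k) (4⁻¹) = 1 := by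
  have h2 : (2 : k) ≠ 0 := Ring.two_ne_zero hchar
  have h4 : (4 : k) ≠ 0 := by
    have : (4 : k) = 2 * 2 := by norm_num
    rw [this]; exact mul_ne_zero h2 h2
  have : (4 : Loc k) = algebraMap k (Loc k) 4 := (map_ofNat _ 4).symm
  rw [this, ← map_mul, mul_inv_cancel₀ h4, map_one]

/-! ### Specialization of `u, v, u', v'` -/

/-- the point at which polynomials are evaluated -/
def pt (a b c d : Loc k) : Fin 7 → Loc k := ![rr k, ss k, tt k, a, b, c, d]

lemma pt_isUnit (a b c d : Loc k) :
    IsUnit ((aeval (pt k a b c d)).toRingHom (X 0 * X 1 * X 2 : Pol k)) := by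
  have h : (aeval (pt k a b c d)).toRingHom (X 0 * X 1 * X 2 : Pol k) = rr k * ss k * tt k := by
    simp [pt]
  rw [h]
  refine IsUnit.mul (IsUnit.mul ?_ ?_) ?_
  · exact IsUnit.of_mul_eq_one _ (rr_mul_inv k)
  · exact IsUnit.of_mul_eq_one _ (ss_mul_inv k)
  · exact IsUnit.of_mul_eq_one _ (tt_mul_inv k)

/-- the specialization homomorphism fixing `r, s, t` -/
def ev (a b c d : Loc k) : Loc k →+* Loc k :=
  IsLocalization.Away.lift (X 0 * X 1 * X 2 : Pol k) (pt_isUnit k a b c d)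

lemma ev_alg (a b c d : Loc k) (p : Pol k) :
    ev k a b c d (algebraMap (Pol k) (Loc k) p) = aeval (pt k a b c d) p := by
  rw [ev, IsLocalization.Away.lift_eq]
  rfl

section
variable (a b c d : Loc k)

lemma ev_rr : ev k a b c d (rr k) = rr k := by
  conv_lhs => rw [rr]
  rw [ev_alg]; simp [pt]
lemma ev_ss : ev k a b c d (ss k) = ss k := by
  conv_lhs => rw [ss]
  rw [ev_alg]; simp [pt]
lemma ev_tt : ev k a b c d (tt k) = tt k := by
  conv_lhs => rw [tt]
  rw [ev_alg]; simp [pt]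
lemma ev_uu : ev k a b c d (uu k) = a := by
  rw [uu, ev_alg]; simp [pt]
lemma ev_vv : ev k a b c d (vv k) = b := by
  rw [vv, ev_alg]; simp [pt]
lemma ev_uu' : ev k a b c d (uu' k) = c := by
  rw [uu', ev_alg]; simp [pt]
lemma ev_vv' : ev k a b c d (vv' k) = d := by
  rw [vv', ev_alg]; simp [pt]

lemma ev_inv {x y : Loc k} (hxy : x * y = 1) (hx : ev k a b c d x = x) :
    ev k a b c d y = y := by
  have h := congrArg (ev k a b c d) hxy
  rw [map_mul, map_one, hx] at h
  calc ev k a b c d y = (x * y) * ev k a b c d y := by rw [hxy, one_mul]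
    _ = y * (x * ev k a b c d y) := by ring
    _ = y := by rw [h, mul_one]

end

/-- the full Laurent coefficient ring -/
def AL : Subalgebra k (Loc k) :=
  Algebra.adjoin k {rr k, rrInv k, ss k, ssInv k, tt k, ttInv k}

lemma A₁_le : A₁ k ≤ AL k := Algebra.adjoin_mono (by
  intro x; simp only [Set.mem_insert_iff, Set.mem_singleton_iff]; tauto)
lemma A₂_le : A₂ k ≤ AL k := Algebra.adjoin_mono (by
  intro x; simp only [Set.mem_insert_iff, Set.mem_singleton_iff]; tauto)
lemma A₃_le : A₃ k ≤ AL k := Algebra.adjoin_mono (by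
  intro x; simp only [Set.mem_insert_iff, Set.mem_singleton_iff]; tauto)
lemma A₀_le₁ : A₀ k ≤ A₁ k := Algebra.adjoin_mono (by
  intro x; simp only [Set.mem_insert_iff, Set.mem_singleton_iff]; tauto)
lemma A₀_le₂ : A₀ k ≤ A₂ k := Algebra.adjoin_mono (by
  intro x; simp only [Set.mem_insert_iff, Set.mem_singleton_iff]; tauto)
lemma A₀_le₃ : A₀ k ≤ A₃ k := Algebra.adjoin_mono (by
  intro x; simp only [Set.mem_insert_iff, Set.mem_singleton_iff]; tauto)

lemma rr_mem : rr k ∈ A₀ k := Algebra.subset_adjoin (by simp)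
lemma ss_mem : ss k ∈ A₀ k := Algebra.subset_adjoin (by simp)
lemma tt_mem : tt k ∈ A₀ k := Algebra.subset_adjoin (by simp)

lemma ev_fix (a b c d : Loc k) {x : Loc k} (hx : x ∈ AL k) : ev k a b c d x = x := by
  rw [AL] at hx
  induction hx using Algebra.adjoin_induction with
  | mem x hx =>
    simp only [Set.mem_insert_iff, Set.mem_singleton_iff] at hx
    rcases hx with rfl | rfl | rfl | rfl | rfl | rfl
    · exact ev_rr k a b c d
    · exact ev_inv k a b c d (rr_mul_inv k) (ev_rr k a b c d)
    · exact ev_ss k a b c d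
    · exact ev_inv k a b c d (ss_mul_inv k) (ev_ss k a b c d)
    · exact ev_tt k a b c d
    · exact ev_inv k a b c d (tt_mul_inv k) (ev_tt k a b c d)
  | algebraMap z =>
    rw [algebraMap_loc, ev_alg, ← algebraMap_loc]
    simp
  | add x y _ _ hx hy => rw [map_add, hx, hy]
  | mul x y _ _ hx hy => rw [map_mul, hx, hy]

/-! ### Linear independence over the Laurent ring -/

lemma unit_cancel {x y z : Loc k} (hxy : x * y = 1) (h : x * z = 0) : z = 0 := by
  calc z = (x * y) * z := by rw [hxy, one_mul]
    _ = y * (x * z) := by ring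
    _ = 0 := by rw [h, mul_zero]

lemma g₀_0 : g₀ k 0 = rr k ^ 2 * ss k ^ 2 * (uu k * vv k * uu' k * vv' k) := rfl
lemma g₀_1 : g₀ k 1 = rr k ^ 2 * tt k ^ 2 * ((uu k ^ 2 - vv k ^ 2) * (uu' k ^ 2 - vv' k ^ 2)) := rfl
lemma g₀_2 : g₀ k 2 = ss k ^ 2 * tt k ^ 2 * (uu k * vv' k - vv k * uu' k) ^ 2 := rfl
lemma g₀_3 : g₀ k 3 = rr k * ss k * tt k * ((uu k * uu' k + vv k * vv' k) * (uu k * vv' k - vv k * uu' k)) := rfl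
lemma g₀_4 : g₀ k 4 = rr k ^ 2 * ss k * tt k * ((uu k * uu' k - vv k * vv' k) * (uu k * vv' k + vv k * uu' k)) := rfl
lemma g₀_5 : g₀ k 5 = rr k * ss k ^ 2 * tt k * ((uu k * uu' k - vv k * vv' k) * (uu k * vv' k - vv k * uu' k)) := rfl
lemma g₀_6 : g₀ k 6 = rr k * ss k * tt k ^ 2 * ((uu k * vv' k + vv k * uu' k) * (uu k * vv' k - vv k * uu' k)) := rfl
lemma g₀_7 : g₀ k 7 = rr k ^ 2 * ss k ^ 2 * tt k * ((uu k * uu' k + vv k * vv' k) * (uu k * vv' k + vv k * uu' k)) := rfl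
lemma g₀_8 : g₀ k 8 = rr k ^ 2 * ss k * tt k ^ 2 * ((uu k * uu' k - vv k * vv' k) * (uu k * uu' k + vv k * vv' k)) := rfl
lemma succ0 : Fin.succ (0 : Fin 8) = (1 : Fin 9) := rfl
lemma succ1 : Fin.succ (Fin.succ (0 : Fin 7)) = (2 : Fin 9) := rfl
lemma succ2 : Fin.succ (Fin.succ (Fin.succ (0 : Fin 6))) = (3 : Fin 9) := rfl
lemma succ3 : Fin.succ (Fin.succ (Fin.succ (Fin.succ (0 : Fin 5)))) = (4 : Fin 9) := rfl
lemma succ4 : Fin.succ (Fin.succ (Fin.succ (Fin.succ (Fin.succ (0 : Fin 4))))) = (5 : Fin 9) := rfl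
lemma succ5 : Fin.succ (Fin.succ (Fin.succ (Fin.succ (Fin.succ (Fin.succ (0 : Fin 3)))))) = (6 : Fin 9) := rfl
lemma succ6 : Fin.succ (Fin.succ (Fin.succ (Fin.succ (Fin.succ (Fin.succ (Fin.succ (0 : Fin 2))))))) = (7 : Fin 9) := rfl
lemma succ7 : Fin.succ (Fin.succ (Fin.succ (Fin.succ (Fin.succ (Fin.succ (Fin.succ (Fin.succ (0 : Fin 1)))))))) = (8 : Fin 9) := rfl


lemma indep_aux (hchar : ringChar k ≠ 2) (c : Fin 9 → Loc k) (hc : ∀ i, c i ∈ AL k)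
    (h : ∑ i, c i * g₀ k i = 0) : ∀ i, c i = 0 := by
  have key : ∀ a b a' b' : Loc k, _ := fun a b a' b' => congrArg (ev k a b a' b') h
  simp only [map_sum, map_mul, map_zero, ev_fix k _ _ _ _ (hc _)] at key
  simp only [Fin.sum_univ_succ, Fin.sum_univ_zero, g₀_0, g₀_1, g₀_2, g₀_3, g₀_4, g₀_5, g₀_6,
    g₀_7, g₀_8, Fin.isValue, add_zero, succ0, succ1, succ2, succ3, succ4, succ5, succ6, succ7,
    map_mul, map_add, map_sub, map_pow, ev_rr, ev_ss, ev_tt, ev_uu, ev_vv, ev_uu', ev_vv'] at key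
  have h4 := four_inv k hchar
  have hr := rr_mul_inv k
  have hs := ss_mul_inv k
  have ht := tt_mul_inv k
  have k1 := key 1 0 1 0
  have k2 := key 1 0 0 1
  have k3 := key 1 0 1 1
  have k4 := key 0 1 1 0
  have k5 := key 0 1 0 1
  have k6 := key 0 1 1 1
  have k7 := key 1 1 1 0
  have k8 := key 1 1 0 1
  have k9 := key 1 1 1 1
  clear key h hc
  intro i
  fin_cases i
  · change c 0 = 0
    refine unit_cancel k (x := 4 * (rr k ^ 2 * ss k ^ 2 * tt k ^ 0))
      (y := algebraMap k (Loc k) (4⁻¹) * (rrInv k ^ 2 * ssInv k ^ 2 * ttInv k ^ 0)) ?_ ?_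
    · calc _ = (4 * algebraMap k (Loc k) (4⁻¹)) * ((rr k * rrInv k) ^ 2 * (ss k * ssInv k) ^ 2 * (tt k * ttInv k) ^ 0) := by ring
        _ = 1 := by rw [h4, hr, hs, ht]; ring
    · linear_combination (8) * k1 + (8) * k2 + (-4) * k3 + (8) * k4 + (8) * k5 + (-4) * k6 + (-4) * k7 + (-4) * k8 + (4) * k9
  · change c 1 = 0
    refine unit_cancel k (x := 4 * (rr k ^ 2 * ss k ^ 0 * tt k ^ 2))
      (y := algebraMap k (Loc k) (4⁻¹) * (rrInv k ^ 2 * ssInv k ^ 0 * ttInv k ^ 2)) ?_ ?_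
    · calc _ = (4 * algebraMap k (Loc k) (4⁻¹)) * ((rr k * rrInv k) ^ 2 * (ss k * ssInv k) ^ 0 * (tt k * ttInv k) ^ 2) := by ring
        _ = 1 := by rw [h4, hr, hs, ht]; ring
    · linear_combination (2) * k1 + (2) * k5
  · change c 2 = 0
    refine unit_cancel k (x := 4 * (rr k ^ 0 * ss k ^ 2 * tt k ^ 2))
      (y := algebraMap k (Loc k) (4⁻¹) * (rrInv k ^ 0 * ssInv k ^ 2 * ttInv k ^ 2)) ?_ ?_
    · calc _ = (4 * algebraMap k (Loc k) (4⁻¹)) * ((rr k * rrInv k) ^ 0 * (ss k * ssInv k) ^ 2 * (tt k * ttInv k) ^ 2) := by ring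
        _ = 1 := by rw [h4, hr, hs, ht]; ring
    · linear_combination (2) * k1 + (2) * k2 + (2) * k4 + (2) * k5
  · change c 3 = 0
    refine unit_cancel k (x := 4 * (rr k ^ 1 * ss k ^ 1 * tt k ^ 1))
      (y := algebraMap k (Loc k) (4⁻¹) * (rrInv k ^ 1 * ssInv k ^ 1 * ttInv k ^ 1)) ?_ ?_
    · calc _ = (4 * algebraMap k (Loc k) (4⁻¹)) * ((rr k * rrInv k) ^ 1 * (ss k * ssInv k) ^ 1 * (tt k * ttInv k) ^ 1) := by ring
        _ = 1 := by rw [h4, hr, hs, ht]; ring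
    · linear_combination (-2) * k2 + (1) * k3 + (2) * k4 + (-1) * k6 + (-1) * k7 + (1) * k8
  · change c 4 = 0
    refine unit_cancel k (x := 4 * (rr k ^ 2 * ss k ^ 1 * tt k ^ 1))
      (y := algebraMap k (Loc k) (4⁻¹) * (rrInv k ^ 2 * ssInv k ^ 1 * ttInv k ^ 1)) ?_ ?_
    · calc _ = (4 * algebraMap k (Loc k) (4⁻¹)) * ((rr k * rrInv k) ^ 2 * (ss k * ssInv k) ^ 1 * (tt k * ttInv k) ^ 1) := by ring
        _ = 1 := by rw [h4, hr, hs, ht]; ring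
    · linear_combination (-2) * k1 + (1) * k3 + (2) * k5 + (-1) * k6 + (1) * k7 + (-1) * k8
  · change c 5 = 0
    refine unit_cancel k (x := 4 * (rr k ^ 1 * ss k ^ 2 * tt k ^ 1))
      (y := algebraMap k (Loc k) (4⁻¹) * (rrInv k ^ 1 * ssInv k ^ 2 * ttInv k ^ 1)) ?_ ?_
    · calc _ = (4 * algebraMap k (Loc k) (4⁻¹)) * ((rr k * rrInv k) ^ 1 * (ss k * ssInv k) ^ 2 * (tt k * ttInv k) ^ 1) := by ring
        _ = 1 := by rw [h4, hr, hs, ht]; ring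
    · linear_combination (1) * k3 + (1) * k6 + (-1) * k7 + (-1) * k8
  · change c 6 = 0
    refine unit_cancel k (x := 4 * (rr k ^ 1 * ss k ^ 1 * tt k ^ 2))
      (y := algebraMap k (Loc k) (4⁻¹) * (rrInv k ^ 1 * ssInv k ^ 1 * ttInv k ^ 2)) ?_ ?_
    · calc _ = (4 * algebraMap k (Loc k) (4⁻¹)) * ((rr k * rrInv k) ^ 1 * (ss k * ssInv k) ^ 1 * (tt k * ttInv k) ^ 2) := by ring
        _ = 1 := by rw [h4, hr, hs, ht]; ring
    · linear_combination (2) * k2 + (-2) * k4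
  · change c 7 = 0
    refine unit_cancel k (x := 4 * (rr k ^ 2 * ss k ^ 2 * tt k ^ 1))
      (y := algebraMap k (Loc k) (4⁻¹) * (rrInv k ^ 2 * ssInv k ^ 2 * ttInv k ^ 1)) ?_ ?_
    · calc _ = (4 * algebraMap k (Loc k) (4⁻¹)) * ((rr k * rrInv k) ^ 2 * (ss k * ssInv k) ^ 2 * (tt k * ttInv k) ^ 1) := by ring
        _ = 1 := by rw [h4, hr, hs, ht]; ring
    · linear_combination (-2) * k1 + (-2) * k2 + (1) * k3 + (-2) * k4 + (-2) * k5 + (1) * k6 + (1) * k7 + (1) * k8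
  · change c 8 = 0
    refine unit_cancel k (x := 4 * (rr k ^ 2 * ss k ^ 1 * tt k ^ 2))
      (y := algebraMap k (Loc k) (4⁻¹) * (rrInv k ^ 2 * ssInv k ^ 1 * ttInv k ^ 2)) ?_ ?_
    · calc _ = (4 * algebraMap k (Loc k) (4⁻¹)) * ((rr k * rrInv k) ^ 2 * (ss k * ssInv k) ^ 1 * (tt k * ttInv k) ^ 2) := by ring
        _ = 1 := by rw [h4, hr, hs, ht]; ring
    · linear_combination (2) * k1 + (-2) * k5

/-! ### The intersection of the three coefficient rings -/

/-- `x` becomes a polynomial after multiplication by a power of `q`. -/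
def Den (q : Pol k) (x : Loc k) : Prop :=
  ∃ (n : ℕ) (p : Pol k), algebraMap (Pol k) (Loc k) (q ^ n) * x = algebraMap (Pol k) (Loc k) p

lemma den_alg (q p : Pol k) : Den k q (algebraMap (Pol k) (Loc k) p) :=
  ⟨0, p, by simp⟩

lemma den_inv (q p : Pol k) {x y : Loc k} (hxy : x * y = 1)
    (h : algebraMap (Pol k) (Loc k) q = x * algebraMap (Pol k) (Loc k) p) : Den k q y :=
  ⟨1, p, by rw [pow_one, h]; linear_combination (algebraMap (Pol k) (Loc k) p) * hxy⟩

lemma den_adjoin (q : Pol k) (s : Set (Loc k)) (hs : ∀ x ∈ s, Den k q x) {x : Loc k}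
    (hx : x ∈ Algebra.adjoin k s) : Den k q x := by
  induction hx using Algebra.adjoin_induction with
  | mem x hx => exact hs x hx
  | algebraMap z => rw [algebraMap_loc]; exact den_alg k q _
  | add x y _ _ hx hy =>
    obtain ⟨n, p, hp⟩ := hx
    obtain ⟨m, p', hp'⟩ := hy
    refine ⟨n + m, q ^ m * p + q ^ n * p', ?_⟩
    rw [map_add, map_mul, map_mul, ← hp, ← hp', pow_add, map_mul]
    ring
  | mul x y _ _ hx hy =>
    obtain ⟨n, p, hp⟩ := hx
    obtain ⟨m, p', hp'⟩ := hy
    refine ⟨n + m, p * p', ?_⟩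
    rw [map_mul, ← hp, ← hp', pow_add, map_mul]
    ring

lemma den₁ {x : Loc k} (hx : x ∈ A₁ k) : Den k (X 0 * X 1) x := by
  refine den_adjoin k _ _ ?_ hx
  intro y hy
  simp only [Set.mem_insert_iff, Set.mem_singleton_iff] at hy
  rcases hy with rfl | rfl | rfl | rfl | rfl
  · exact den_alg k _ _
  · exact den_inv k _ (X 1) (rr_mul_inv k) (by simp only [rr, map_mul])
  · exact den_alg k _ _
  · exact den_inv k _ (X 0) (ss_mul_inv k) (by simp only [ss, map_mul]; ring)
  · exact den_alg k _ _

lemma den₂ {x : Loc k} (hx : x ∈ A₂ k) : Den k (X 0 * X 2) x := by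
  refine den_adjoin k _ _ ?_ hx
  intro y hy
  simp only [Set.mem_insert_iff, Set.mem_singleton_iff] at hy
  rcases hy with rfl | rfl | rfl | rfl | rfl
  · exact den_alg k _ _
  · exact den_inv k _ (X 2) (rr_mul_inv k) (by simp only [rr, map_mul])
  · exact den_alg k _ _
  · exact den_alg k _ _
  · exact den_inv k _ (X 0) (tt_mul_inv k) (by simp only [tt, map_mul]; ring)

lemma den₃ {x : Loc k} (hx : x ∈ A₃ k) : Den k (X 1 * X 2) x := by
  refine den_adjoin k _ _ ?_ hx
  intro y hy
  simp only [Set.mem_insert_iff, Set.mem_singleton_iff] at hy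
  rcases hy with rfl | rfl | rfl | rfl | rfl
  · exact den_alg k _ _
  · exact den_alg k _ _
  · exact den_inv k _ (X 2) (ss_mul_inv k) (by simp only [ss, map_mul])
  · exact den_alg k _ _
  · exact den_inv k _ (X 1) (tt_mul_inv k) (by simp only [tt, map_mul]; ring)

lemma alg_inj : Function.Injective (algebraMap (Pol k) (Loc k)) := by
  refine IsLocalization.injective (M := Submonoid.powers (X 0 * X 1 * X 2 : Pol k)) _ ?_
  refine powers_le_nonZeroDivisors_of_noZeroDivisors ?_
  exact mul_ne_zero (mul_ne_zero (X_ne_zero _) (X_ne_zero _)) (X_ne_zero _)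

lemma X_pow_dvd_cancel (i a b : Fin 7) (ha : i ≠ a) (hb : i ≠ b) (n m : ℕ) (p : Pol k)
    (h : (X i : Pol k) ^ n ∣ (X a * X b) ^ m * p) : (X i : Pol k) ^ n ∣ p := by
  have hp : Prime (X i : Pol k) := MvPolynomial.X_prime
  have hnot : ∀ j, i ≠ j → ¬ (X i : Pol k) ∣ X j := by
    intro j hij hd
    exact hij (X_dvd_X.mp hd)
  refine hp.pow_dvd_of_dvd_mul_left n ?_ h
  intro hd
  rcases hp.dvd_or_dvd (hp.dvd_of_dvd_pow hd) with h1 | h1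
  · exact hnot a ha h1
  · exact hnot b hb h1

lemma unit_cancel_pow {x y z w : Loc k} (hxy : x * y = 1) (n : ℕ) (h : x ^ n * z = x ^ n * w) :
    z = w := (IsUnit.of_mul_eq_one _ hxy |>.pow n).mul_left_cancel h

lemma inter_coeff {x : Loc k} (h₁ : x ∈ A₁ k) (h₂ : x ∈ A₂ k) (h₃ : x ∈ A₃ k) : x ∈ A₀ k := by
  obtain ⟨n, p, hp⟩ := den₁ k h₁
  obtain ⟨m, q, hq⟩ := den₂ k h₂
  obtain ⟨l, w, hw⟩ := den₃ k h₃
  have e1 : (X 0 * X 2) ^ m * p = (X 0 * X 1) ^ n * q := by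
    apply alg_inj k
    rw [map_mul, map_mul, ← hp, ← hq]; ring
  have d1 : (X 1 : Pol k) ^ n ∣ p := by
    refine X_pow_dvd_cancel k 1 0 2 (by decide) (by decide) n m p ?_
    rw [e1, mul_pow]
    exact ⟨X 0 ^ n * q, by ring⟩
  obtain ⟨p₁, rfl⟩ := d1
  have hp₁ : algebraMap (Pol k) (Loc k) (X 0 ^ n) * x = algebraMap (Pol k) (Loc k) p₁ := by
    refine unit_cancel_pow k (ss_mul_inv k) n ?_
    rw [ss, ← map_pow, ← map_mul, ← hp, mul_pow, map_mul]
    ring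
  have e2 : (X 1 * X 2) ^ l * p₁ = X 0 ^ n * w := by
    apply alg_inj k
    rw [map_mul, map_mul, ← hp₁, ← hw]; ring
  have d2 : (X 0 : Pol k) ^ n ∣ p₁ := by
    refine X_pow_dvd_cancel k 0 1 2 (by decide) (by decide) n l p₁ ?_
    rw [e2]
    exact Dvd.intro _ rfl
  obtain ⟨p₂, rfl⟩ := d2
  have hp₂ : x = algebraMap (Pol k) (Loc k) p₂ := by
    refine unit_cancel_pow k (rr_mul_inv k) n ?_
    rw [rr, ← map_pow, hp₁, map_mul]
  have hfix := ev_fix k 0 0 0 0 (A₁_le k h₁)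
  rw [← hfix, hp₂, ev_alg]
  refine MvPolynomial.induction_on (motive := fun p => aeval (pt k 0 0 0 0) p ∈ A₀ k)
    p₂ ?_ ?_ ?_
  · intro a
    rw [aeval_C]
    exact (A₀ k).algebraMap_mem a
  · intro f g hf hg
    rw [map_add]
    exact (A₀ k).add_mem hf hg
  · intro f i hf
    rw [map_mul, aeval_X]
    refine (A₀ k).mul_mem hf ?_
    fin_cases i
    · exact rr_mem k
    · exact ss_mem k
    · exact tt_mem k
    all_goals exact (A₀ k).zero_mem

/-! ### Comparing spans -/

lemma span_le_of_matrix (A : Subalgebra k (Loc k)) (g h : Fin 9 → Loc k) (d e : Loc k)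
    (he : e ∈ A) (hde : d * e = 1) (a : Fin 9 → Fin 9 → A)
    (H : ∀ j, d * h j = ∑ i, (a j i : Loc k) * g i) :
    Submodule.span A (Set.range h) ≤ Submodule.span A (Set.range g) := by
  rw [Submodule.span_le]
  rintro _ ⟨j, rfl⟩
  have h1 : h j = (⟨e, he⟩ : A) • ∑ i, a j i • g i := by
    have : ∑ i, a j i • g i = d * h j := (H j).symm
    rw [this]
    change h j = e * (d * h j)
    linear_combination (- h j) * hde
  rw [h1]
  exact Submodule.smul_mem _ _ (Submodule.sum_mem _ fun i _ =>
    Submodule.smul_mem _ _ (Submodule.subset_span ⟨i, rfl⟩))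

lemma mat10 (A : Subalgebra k (Loc k)) (R S T : A) (hR : (R : Loc k) = rr k)
    (hS : (S : Loc k) = ss k) (hT : (T : Loc k) = tt k) :
    ∃ a : Fin 9 → Fin 9 → A, ∀ j, 4 * rr k ^ 2 * ss k ^ 2 * g₁ k j = ∑ i, (a j i : Loc k) * g₀ k i := by
  refine ⟨
    ![![4*T^2, 2*S^2, 2*R^2, 0, 0, 0, 0, 0, 2*S],
      ![0, 0, 0, R*S, S, R, 0, 1, 0],
      ![4*T^2, 0, 2*R^2, 0, 0, 0, 2*R*S, 0, 0],
      ![0, 0, 0, -R*S, S, -R, 0, 1, 0],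
      ![4, 0, 0, 0, 0, 0, 0, 0, 0],
      ![0, 0, 0, R*S, -S, -R, 0, 1, 0],
      ![4*T^2, 0, 2*R^2, 0, 0, 0, -2*R*S, 0, 0],
      ![0, 0, 0, -R*S, -S, R, 0, 1, 0],
      ![4*T^2, 2*S^2, 2*R^2, 0, 0, 0, 0, 0, -2*S]], ?_⟩
  have c2 : ((2 : A) : Loc k) = 2 := rfl
  have c4 : ((4 : A) : Loc k) = 4 := rfl
  have c8 : ((8 : A) : Loc k) = 8 := rfl
  have c16 : ((16 : A) : Loc k) = 16 := rfl
  intro j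
  fin_cases j <;>
  · simp [Fin.sum_univ_succ, g₁, g₀, hR, hS, hT, c2, c4, c8, c16]
    try ring

lemma mat01 (A : Subalgebra k (Loc k)) (R S T : A) (hR : (R : Loc k) = rr k)
    (hS : (S : Loc k) = ss k) (hT : (T : Loc k) = tt k) :
    ∃ a : Fin 9 → Fin 9 → A, ∀ j, 4 * g₀ k j = ∑ i, (a j i : Loc k) * g₁ k i := by
  refine ⟨
    ![![0, 0, 0, 0, 4*R^2*S^2, 0, 0, 0, 0],
      ![4*R^2, 0, -4*R^2, 0, 0, 0, -4*R^2, 0, 4*R^2],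
      ![0, 0, 4*S^2, 0, -8*S^2*T^2, 0, 4*S^2, 0, 0],
      ![0, 4*R*S, 0, -4*R*S, 0, 4*R*S, 0, -4*R*S, 0],
      ![0, 4*R^2*S, 0, 4*R^2*S, 0, -4*R^2*S, 0, -4*R^2*S, 0],
      ![0, 4*R*S^2, 0, -4*R*S^2, 0, -4*R*S^2, 0, 4*R*S^2, 0],
      ![0, 0, 4*R*S, 0, 0, 0, -4*R*S, 0, 0],
      ![0, 4*R^2*S^2, 0, 4*R^2*S^2, 0, 4*R^2*S^2, 0, 4*R^2*S^2, 0],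
      ![4*R^2*S, 0, 0, 0, 0, 0, 0, 0, -4*R^2*S]], ?_⟩
  have c2 : ((2 : A) : Loc k) = 2 := rfl
  have c4 : ((4 : A) : Loc k) = 4 := rfl
  have c8 : ((8 : A) : Loc k) = 8 := rfl
  have c16 : ((16 : A) : Loc k) = 16 := rfl
  intro j
  fin_cases j <;>
  · simp [Fin.sum_univ_succ, g₀, g₁, hR, hS, hT, c2, c4, c8, c16]
    try ring

lemma mat20 (A : Subalgebra k (Loc k)) (R S T : A) (hR : (R : Loc k) = rr k)
    (hS : (S : Loc k) = ss k) (hT : (T : Loc k) = tt k) :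
    ∃ a : Fin 9 → Fin 9 → A, ∀ j, 4 * rr k ^ 2 * tt k ^ 2 * g₂ k j = ∑ i, (a j i : Loc k) * g₀ k i := by
  refine ⟨
    ![![16*T^2, 4*S^2, 8*R^2, 0, 0, 0, 0, 0, 0],
      ![0, 0, 0, 0, 0, 0, -4*R, 0, 4],
      ![0, 0, 0, 0, 0, 2*R*T, 0, 2*T, 0],
      ![0, 0, 0, 0, 0, 0, 4*R, 0, 4],
      ![0, 4, 0, 0, 0, 0, 0, 0, 0],
      ![0, 0, 0, 2*R*T, 2*T, 0, 0, 0, 0],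
      ![0, 0, 0, 0, 0, -2*R*T, 0, 2*T, 0],
      ![0, 0, 0, -2*R*T, 2*T, 0, 0, 0, 0],
      ![4*T^2, 0, 0, 0, 0, 0, 0, 0, 0]], ?_⟩
  have c2 : ((2 : A) : Loc k) = 2 := rfl
  have c4 : ((4 : A) : Loc k) = 4 := rfl
  have c8 : ((8 : A) : Loc k) = 8 := rfl
  have c16 : ((16 : A) : Loc k) = 16 := rfl
  intro j
  fin_cases j <;>
  · simp [Fin.sum_univ_succ, g₂, g₀, hR, hS, hT, c2, c4, c8, c16]
    try ring

lemma mat02 (A : Subalgebra k (Loc k)) (R S T : A) (hR : (R : Loc k) = rr k)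
    (hS : (S : Loc k) = ss k) (hT : (T : Loc k) = tt k) :
    ∃ a : Fin 9 → Fin 9 → A, ∀ j, 4 * g₀ k j = ∑ i, (a j i : Loc k) * g₂ k i := by
  refine ⟨
    ![![0, 0, 0, 0, 0, 0, 0, 0, 4*R^2],
      ![0, 0, 0, 0, 4*R^2*T^2, 0, 0, 0, 0],
      ![2*T^2, 0, 0, 0, -2*S^2*T^2, 0, 0, 0, -8*T^2],
      ![0, 0, 0, 0, 0, 4*R*T, 0, -4*R*T, 0],
      ![0, 0, 0, 0, 0, 4*R^2*T, 0, 4*R^2*T, 0],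
      ![0, 0, 4*R*T, 0, 0, 0, -4*R*T, 0, 0],
      ![0, -2*R*T^2, 0, 2*R*T^2, 0, 0, 0, 0, 0],
      ![0, 0, 4*R^2*T, 0, 0, 0, 4*R^2*T, 0, 0],
      ![0, 2*R^2*T^2, 0, 2*R^2*T^2, 0, 0, 0, 0, 0]], ?_⟩
  have c2 : ((2 : A) : Loc k) = 2 := rfl
  have c4 : ((4 : A) : Loc k) = 4 := rfl
  have c8 : ((8 : A) : Loc k) = 8 := rfl
  have c16 : ((16 : A) : Loc k) = 16 := rfl
  intro j
  fin_cases j <;>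
  · simp [Fin.sum_univ_succ, g₀, g₂, hR, hS, hT, c2, c4, c8, c16]
    try ring

lemma mat30 (A : Subalgebra k (Loc k)) (R S T : A) (hR : (R : Loc k) = rr k)
    (hS : (S : Loc k) = ss k) (hT : (T : Loc k) = tt k) :
    ∃ a : Fin 9 → Fin 9 → A, ∀ j, 4 * ss k ^ 2 * tt k ^ 2 * g₃ k j = ∑ i, (a j i : Loc k) * g₀ k i := by
  refine ⟨
    ![![4*T^2, 2*S^2, 2*R^2, 0, 0, 0, 0, 0, 2*S],
      ![16*T^2, 0, 4*R^2, 0, 0, 0, 0, 0, 0],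
      ![0, 0, 4, 0, 0, 0, 0, 0, 0],
      ![4*T^2, 2*S^2, 2*R^2, 0, 0, 0, 0, 0, -2*S],
      ![0, 0, 0, 2*S*T, 0, 2*T, 0, 0, 0],
      ![0, 0, 0, 2*S*T, 0, -2*T, 0, 0, 0],
      ![0, 0, 0, 0, 0, 0, 4*S, 0, 0],
      ![0, 0, 0, 0, 2*S*T, 0, 0, 2*T, 0],
      ![0, 0, 0, 0, -2*S*T, 0, 0, 2*T, 0]], ?_⟩
  have c2 : ((2 : A) : Loc k) = 2 := rfl
  have c4 : ((4 : A) : Loc k) = 4 := rfl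
  have c8 : ((8 : A) : Loc k) = 8 := rfl
  have c16 : ((16 : A) : Loc k) = 16 := rfl
  intro j
  fin_cases j <;>
  · simp [Fin.sum_univ_succ, g₃, g₀, hR, hS, hT, c2, c4, c8, c16]
    try ring

lemma mat03 (A : Subalgebra k (Loc k)) (R S T : A) (hR : (R : Loc k) = rr k)
    (hS : (S : Loc k) = ss k) (hT : (T : Loc k) = tt k) :
    ∃ a : Fin 9 → Fin 9 → A, ∀ j, 4 * g₀ k j = ∑ i, (a j i : Loc k) * g₃ k i := by
  refine ⟨
    ![![0, S^2, -R^2*S^2, 0, 0, 0, 0, 0, 0],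
      ![4*T^2, -2*T^2, -2*R^2*T^2, 4*T^2, 0, 0, 0, 0, 0],
      ![0, 0, 4*S^2*T^2, 0, 0, 0, 0, 0, 0],
      ![0, 0, 0, 0, 4*S*T, 4*S*T, 0, 0, 0],
      ![0, 0, 0, 0, 0, 0, 0, 4*S*T, -4*S*T],
      ![0, 0, 0, 0, 4*S^2*T, -4*S^2*T, 0, 0, 0],
      ![0, 0, 0, 0, 0, 0, 4*S*T^2, 0, 0],
      ![0, 0, 0, 0, 0, 0, 0, 4*S^2*T, 4*S^2*T],
      ![4*S*T^2, 0, 0, -4*S*T^2, 0, 0, 0, 0, 0]], ?_⟩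
  have c2 : ((2 : A) : Loc k) = 2 := rfl
  have c4 : ((4 : A) : Loc k) = 4 := rfl
  have c8 : ((8 : A) : Loc k) = 8 := rfl
  have c16 : ((16 : A) : Loc k) = 16 := rfl
  intro j
  fin_cases j <;>
  · simp [Fin.sum_univ_succ, g₀, g₃, hR, hS, hT, c2, c4, c8, c16]
    try ring

lemma inv_four_mem (A : Subalgebra k (Loc k)) : algebraMap k (Loc k) (4⁻¹) ∈ A :=
  A.algebraMap_mem _

lemma M₁_eq (hchar : ringChar k ≠ 2) :
    M₁ k = Submodule.span (A₁ k) (Set.range (g₀ k)) := by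
  have h4 := four_inv k hchar
  refine le_antisymm ?_ ?_
  · refine span_le_of_matrix k (A₁ k) _ _ (4 * rr k ^ 2 * ss k ^ 2)
      (algebraMap k (Loc k) (4⁻¹) * rrInv k ^ 2 * ssInv k ^ 2) ?_ ?_ _
      (mat10 k (A₁ k) ⟨rr k, A₀_le₁ k (rr_mem k)⟩ ⟨ss k, A₀_le₁ k (ss_mem k)⟩
        ⟨tt k, A₀_le₁ k (tt_mem k)⟩ rfl rfl rfl).choose_spec
    · exact mul_mem (mul_mem (inv_four_mem k _)
        (pow_mem (Algebra.subset_adjoin (by simp)) 2))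
        (pow_mem (Algebra.subset_adjoin (by simp)) 2)
    · calc _ = (4 * algebraMap k (Loc k) (4⁻¹)) * (rr k * rrInv k) ^ 2 *
            (ss k * ssInv k) ^ 2 := by ring
        _ = 1 := by rw [h4, rr_mul_inv, ss_mul_inv]; ring
  · exact span_le_of_matrix k (A₁ k) _ _ 4 _ (inv_four_mem k _) h4 _
      (mat01 k (A₁ k) ⟨rr k, A₀_le₁ k (rr_mem k)⟩ ⟨ss k, A₀_le₁ k (ss_mem k)⟩
        ⟨tt k, A₀_le₁ k (tt_mem k)⟩ rfl rfl rfl).choose_spec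

lemma M₂_eq (hchar : ringChar k ≠ 2) :
    M₂ k = Submodule.span (A₂ k) (Set.range (g₀ k)) := by
  have h4 := four_inv k hchar
  refine le_antisymm ?_ ?_
  · refine span_le_of_matrix k (A₂ k) _ _ (4 * rr k ^ 2 * tt k ^ 2)
      (algebraMap k (Loc k) (4⁻¹) * rrInv k ^ 2 * ttInv k ^ 2) ?_ ?_ _
      (mat20 k (A₂ k) ⟨rr k, A₀_le₂ k (rr_mem k)⟩ ⟨ss k, A₀_le₂ k (ss_mem k)⟩
        ⟨tt k, A₀_le₂ k (tt_mem k)⟩ rfl rfl rfl).choose_spec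
    · exact mul_mem (mul_mem (inv_four_mem k _)
        (pow_mem (Algebra.subset_adjoin (by simp)) 2))
        (pow_mem (Algebra.subset_adjoin (by simp)) 2)
    · calc _ = (4 * algebraMap k (Loc k) (4⁻¹)) * (rr k * rrInv k) ^ 2 *
            (tt k * ttInv k) ^ 2 := by ring
        _ = 1 := by rw [h4, rr_mul_inv, tt_mul_inv]; ring
  · exact span_le_of_matrix k (A₂ k) _ _ 4 _ (inv_four_mem k _) h4 _
      (mat02 k (A₂ k) ⟨rr k, A₀_le₂ k (rr_mem k)⟩ ⟨ss k, A₀_le₂ k (ss_mem k)⟩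
        ⟨tt k, A₀_le₂ k (tt_mem k)⟩ rfl rfl rfl).choose_spec

lemma M₃_eq (hchar : ringChar k ≠ 2) :
    M₃ k = Submodule.span (A₃ k) (Set.range (g₀ k)) := by
  have h4 := four_inv k hchar
  refine le_antisymm ?_ ?_
  · refine span_le_of_matrix k (A₃ k) _ _ (4 * ss k ^ 2 * tt k ^ 2)
      (algebraMap k (Loc k) (4⁻¹) * ssInv k ^ 2 * ttInv k ^ 2) ?_ ?_ _
      (mat30 k (A₃ k) ⟨rr k, A₀_le₃ k (rr_mem k)⟩ ⟨ss k, A₀_le₃ k (ss_mem k)⟩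
        ⟨tt k, A₀_le₃ k (tt_mem k)⟩ rfl rfl rfl).choose_spec
    · exact mul_mem (mul_mem (inv_four_mem k _)
        (pow_mem (Algebra.subset_adjoin (by simp)) 2))
        (pow_mem (Algebra.subset_adjoin (by simp)) 2)
    · calc _ = (4 * algebraMap k (Loc k) (4⁻¹)) * (ss k * ssInv k) ^ 2 *
            (tt k * ttInv k) ^ 2 := by ring
        _ = 1 := by rw [h4, ss_mul_inv, tt_mul_inv]; ring
  · exact span_le_of_matrix k (A₃ k) _ _ 4 _ (inv_four_mem k _) h4 _
      (mat03 k (A₃ k) ⟨rr k, A₀_le₃ k (rr_mem k)⟩ ⟨ss k, A₀_le₃ k (ss_mem k)⟩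
        ⟨tt k, A₀_le₃ k (tt_mem k)⟩ rfl rfl rfl).choose_spec

lemma mem_span_coeffs (A : Subalgebra k (Loc k)) {x : Loc k}
    (hx : x ∈ Submodule.span A (Set.range (g₀ k))) :
    ∃ c : Fin 9 → Loc k, (∀ i, c i ∈ A) ∧ ∑ i, c i * g₀ k i = x := by
  rw [Submodule.mem_span_range_iff_exists_fun] at hx
  obtain ⟨c, hc⟩ := hx
  exact ⟨fun i => c i, fun i => (c i).2, hc⟩

lemma span_of_coeffs (A : Subalgebra k (Loc k)) (c : Fin 9 → Loc k) (hc : ∀ i, c i ∈ A) :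
    ∑ i, c i * g₀ k i ∈ Submodule.span A (Set.range (g₀ k)) := by
  rw [Submodule.mem_span_range_iff_exists_fun]
  exact ⟨fun i => ⟨c i, hc i⟩, rfl⟩

lemma coeffs_unique (hchar : ringChar k ≠ 2) (c d : Fin 9 → Loc k) (hc : ∀ i, c i ∈ AL k)
    (hd : ∀ i, d i ∈ AL k) (h : ∑ i, c i * g₀ k i = ∑ i, d i * g₀ k i) : c = d := by
  funext i
  have := indep_aux k hchar (fun i => c i - d i) (fun i => (AL k).sub_mem (hc i) (hd i))
    (by simp only [sub_mul, Finset.sum_sub_distrib, h, sub_self]) i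
  exact sub_eq_zero.mp this

/-- `M₁ ∩ M₂ ∩ M₃ = M₀` as subsets of the localization, and the nine
generators of `M₀` are linearly independent over `k[r,s,t]`, so they form a basis of the
intersection, which is therefore free of rank `9`. -/
theorem intersection_eq_and_free (hchar : ringChar k ≠ 2) :
    ((M₁ k : Set (Loc k)) ∩ (M₂ k : Set (Loc k)) ∩ (M₃ k : Set (Loc k))
        = (M₀ k : Set (Loc k))) ∧
      LinearIndependent (A₀ k) (g₀ k) := by
  refine ⟨?_, ?_⟩
  · rw [M₁_eq k hchar, M₂_eq k hchar, M₃_eq k hchar, M₀]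
    ext x
    constructor
    · rintro ⟨⟨h₁, h₂⟩, h₃⟩
      obtain ⟨c₁, hc₁, e₁⟩ := mem_span_coeffs k _ h₁
      obtain ⟨c₂, hc₂, e₂⟩ := mem_span_coeffs k _ h₂
      obtain ⟨c₃, hc₃, e₃⟩ := mem_span_coeffs k _ h₃
      have e12 : c₁ = c₂ := coeffs_unique k hchar c₁ c₂ (fun i => A₁_le k (hc₁ i))
        (fun i => A₂_le k (hc₂ i)) (e₁.trans e₂.symm)
      have e13 : c₁ = c₃ := coeffs_unique k hchar c₁ c₃ (fun i => A₁_le k (hc₁ i))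
        (fun i => A₃_le k (hc₃ i)) (e₁.trans e₃.symm)
      subst e12 e13
      rw [← e₁]
      exact span_of_coeffs k _ c₁ fun i => inter_coeff k (hc₁ i) (hc₂ i) (hc₃ i)
    · intro hx
      obtain ⟨c, hc, rfl⟩ := mem_span_coeffs k _ hx
      exact ⟨⟨span_of_coeffs k _ c fun i => A₀_le₁ k (hc i),
        span_of_coeffs k _ c fun i => A₀_le₂ k (hc i)⟩,
        span_of_coeffs k _ c fun i => A₀_le₃ k (hc i)⟩
  · rw [Fintype.linearIndependent_iff]
    intro c hc i
    have := indep_aux k hchar (fun i => (c i : Loc k))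
      (fun i => A₁_le k (A₀_le₁ k (c i).2)) hc i
    exact Subtype.ext this

end Stmt5
end
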